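/- arXiv:0801.3074 — 3 statements merged into one kernel-verified Lean document; each statement's English description precedes it below -/
import Mathlib

section
/- The commuting variety C has dimension dim C = dim g + rk g. Moreover, for y in a dense open subset of g, the fiber of the first projection π₁ : C → g, (x,y') ↦ x, over y is isomorphic to a Cartan subalgebra of g (an affine space of dimension rk g). -/
noncomputable section

namespace CV

variable (k : Type*) [Field k] (V : Type*) [AddCommGroup V] [Module k V] [FiniteDimensional k V]

/-- Coordinates with respect to a chosen basis of `V`. -/
def coordFn (z : V) (i : Module.Free.ChooseBasisIndex k V) : k :=
  (Module.Free.chooseBasis k V).repr z i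

/-- Evaluation of a polynomial (in the chosen coordinates) at a point of `V`. -/
def evalP (F : MvPolynomial (Module.Free.ChooseBasisIndex k V) k) (z : V) : k :=
  MvPolynomial.aeval (coordFn k V z) F

/-- The Zariski topology on `V`: generated by complements of zero sets of polynomial
functions. -/
def zar : TopologicalSpace V :=
  TopologicalSpace.generateFrom
    {U | ∃ F : MvPolynomial (Module.Free.ChooseBasisIndex k V) k, U = {z | evalP k V F z ≠ 0}}

/-- The dimension of a subset of `V`:  the Krull dimension for the topology induced by the
Zariski topology of `V`. -/
def dimSet (S : Set V) : WithBot ℕ∞ :=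
  @topologicalKrullDim S (TopologicalSpace.induced Subtype.val (zar k V))

/-- The differential at `z ∈ V` of a polynomial `F`, as a linear functional on `V`. -/
def diffAt (F : MvPolynomial (Module.Free.ChooseBasisIndex k V) k) (z : V) : V →ₗ[k] k :=
  (Module.Free.chooseBasis k V).constr k fun i => evalP k V (MvPolynomial.pderiv i F) z

/-- The Zariski tangent space at `z` of a subset `S ⊆ V`:  the common kernel of the
differentials at `z` of all polynomial functions vanishing identically on `S`. -/
def tangent (S : Set V) (z : V) : Submodule k V :=
  ⨅ F ∈ {F | ∀ w ∈ S, evalP k V F w = 0}, LinearMap.ker (diffAt k V F z)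

end CV

/-- The commuting variety `C = {(x,y) ∈ g × g | [x,y] = 0}`. -/
def commSet (k : Type*) (g : Type*) [Field k] [LieRing g] [LieAlgebra k g] : Set (g × g) :=
  {p | ⁅p.1, p.2⁆ = 0}

/-- The centralizer `g_x = {y ∈ g | [x,y] = 0}` of an element `x` of a Lie algebra,
as a submodule. -/
def cent (k : Type*) {g : Type*} [Field k] [LieRing g] [LieAlgebra k g] (x : g) :
    Submodule k g := LinearMap.ker (LieAlgebra.ad k g x)

variable (k : Type*) [Field k] [IsAlgClosed k] [CharZero k]
variable (g : Type*) [LieRing g] [LieAlgebra k g] [FiniteDimensional k g]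

/-!
Regular elements form a dense open set, and for a regular `y` the centralizer of `y` is the Engel
subalgebra of `y`, a Cartan subalgebra; all Cartan subalgebras have dimension `rk g`.

Lower bound: `T ^ rk g` divides the characteristic polynomial `χ_y` of `ad y`; let `q_y` be the
quotient. By Cayley-Hamilton `q_y (ad y)` maps `g` into the Engel subalgebra of `y`, hence into the
centralizer of `y` if `y` is regular, and by density for every `y`. So
`(w, m) ↦ (y + m, q_{y+m} (ad (y + m)) w)`, for a fixed regular `y`, is a polynomial map into the
commuting variety, and the images of a flag have closures that form a long chain of irreducible
closed subsets.

Upper bound: an irreducible closed subset of the commuting variety has a generic point `(x, y)`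
over an algebraically closed field `L`, and the derivations `D` of `L` give enough tangent vectors
`(D x, D y)` to compute its dimension. Let `κ + c` be a nondegenerate invariant form, where `κ` is
the Killing form and `c` factors through the quotient by the derived algebra. Computing traces with
`D` acting on the eigenvalues of `ad x` shows that `D x` lies in the sum of the image of `ad x` and
the centralizer of the Engel subalgebra of `x`, which has dimension at most `rk g`. Since
`⁅x, D y⁆ = ⁅y, D x⁆`, the tangent vectors fill a space of dimension at most
`dim (range (ad x)) + rk g + dim (ker (ad x)) = dim g + rk g`.
-/

namespace CommutingVariety

/-! ### Engel subalgebras and the rank -/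

section Engel

open TensorProduct LieAlgebra

theorem exists_lieEquiv_eq_add_lie_add_lie_lie {R G : Type*} [CommRing R] [Algebra ℚ R] [LieRing G]
    [LieAlgebra R G] {u : G} (hu : IsNilpotent (ad R G u)) :
    ∃ θ : G ≃ₗ⁅R⁆ G, ∀ w, ∃ w', θ w = w + ⁅u, w⁆ + ⁅u, ⁅u, w'⁆⁆ := by
  let _ : Module ℚ G := Module.compHom G (algebraMap ℚ R)
  let _ : LieAlgebra ℚ G := { lie_smul := fun q x y ↦ lie_smul (algebraMap ℚ R q) x y }
  set D := (LieDerivation.ad R G u).toLinearMap with hD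
  have D_apply (w : G) : D w = ⁅u, w⁆ := by
    rw [hD, LieDerivation.coe_ad_apply_eq_ad_apply, ad_apply]
  have hD_nil : IsNilpotent D := by rwa [hD, LieDerivation.coe_ad_apply_eq_ad_apply]
  have ⟨n, hn⟩ := hD_nil
  have hn2 : D ^ (n + 2) = 0 := by rw [pow_add, hn, zero_mul]
  have D_pow (i : ℕ) (q : ℚ) (w : G) : q • (D ^ (i + 1 + 1)) w = ⁅u, ⁅u, q • (D ^ i) w⁆⁆ := by
    rw [lie_smul, lie_smul, pow_succ', pow_succ', Module.End.mul_apply, Module.End.mul_apply,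
      D_apply, D_apply]
  refine ⟨(LieDerivation.ad R G u).exp hD_nil, fun w ↦
    ⟨∑ i ∈ Finset.range n, ((i + 1 + 1).factorial : ℚ)⁻¹ • (D ^ i) w, ?_⟩⟩
  change IsNilpotent.exp D w = _
  rw [IsNilpotent.exp_eq_sum hn2, Finset.sum_range_succ', Finset.sum_range_succ']
  simp only [zero_add, Nat.factorial_one, Nat.cast_one, inv_one, pow_one, one_smul,
    Nat.factorial_zero, pow_zero, LinearMap.add_apply, LinearMap.sum_apply, LinearMap.smul_apply,
    D_pow, lie_smul, D_apply, Module.End.one_apply, lie_sum]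
  abel

variable {K 𝔤 : Type*} [Field K] [LieRing 𝔤] [LieAlgebra K 𝔤]

theorem tensorProduct_comp_ad_baseChange (R : Type*) [CommRing R] [Algebra K R] :
    LinearMap.tensorProduct K R 𝔤 𝔤 ∘ₗ (ad K 𝔤 : 𝔤 →ₗ[K] Module.End K 𝔤).baseChange R =
      (ad R (R ⊗[K] 𝔤) : R ⊗[K] 𝔤 →ₗ[R] Module.End R (R ⊗[K] 𝔤)) := by
  ext x y
  simp [LinearMap.tensorProduct]

variable [FiniteDimensional K 𝔤]

theorem coeff_charpoly_ad_eq_aeval (R : Type*) [CommRing R] [Algebra K R] {ι : Type*} [Fintype ι]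
    [DecidableEq ι] (b : Module.Basis ι K 𝔤) (y : R ⊗[K] 𝔤) (i : ℕ) :
    (ad R (R ⊗[K] 𝔤) y).charpoly.coeff i =
      MvPolynomial.aeval ((Algebra.TensorProduct.basis R b).repr y)
        (((ad K 𝔤 : 𝔤 →ₗ[K] Module.End K 𝔤).polyCharpoly b).coeff i) := by
  have h := LinearMap.polyCharpoly_coeff_eval
    (ad R (R ⊗[K] 𝔤) : R ⊗[K] 𝔤 →ₗ[R] Module.End R (R ⊗[K] 𝔤))
    (Algebra.TensorProduct.basis R b) y i
  rw [← tensorProduct_comp_ad_baseChange, LinearMap.polyCharpoly_baseChange,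
    tensorProduct_comp_ad_baseChange] at h
  rw [MvPolynomial.aeval_def, MvPolynomial.eval₂_eq_eval_map, ← Polynomial.coeff_map, h]
  rfl

theorem map_coeff_charpoly_ad {R S : Type*} [CommRing R] [Algebra K R] [CommRing S] [Algebra K S]
    (φ : R →ₐ[K] S) (y : R ⊗[K] 𝔤) (i : ℕ) :
    φ ((ad R (R ⊗[K] 𝔤) y).charpoly.coeff i) =
      (ad S (S ⊗[K] 𝔤) (φ.toLinearMap.rTensor 𝔤 y)).charpoly.coeff i := by
  classical
  let b := Module.Free.chooseBasis K 𝔤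
  have hrepr (j) : (Algebra.TensorProduct.basis S b).repr (φ.toLinearMap.rTensor 𝔤 y) j =
      φ ((Algebra.TensorProduct.basis R b).repr y j) := by
    induction y with
    | zero => simp
    | add y z hy hz => simp [hy, hz]
    | tmul r y => simp
  rw [coeff_charpoly_ad_eq_aeval R b, coeff_charpoly_ad_eq_aeval S b, ← AlgHom.comp_apply,
    MvPolynomial.comp_aeval]
  exact congrArg (MvPolynomial.aeval · _) (funext hrepr).symm

theorem coeff_charpoly_ad_one_tmul (R : Type*) [CommRing R] [Algebra K R] (y : 𝔤) (i : ℕ) :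
    (ad R (R ⊗[K] 𝔤) (1 ⊗ₜ y)).charpoly.coeff i =
      algebraMap K R ((ad K 𝔤 y).charpoly.coeff i) := by
  have h : ad R (R ⊗[K] 𝔤) (1 ⊗ₜ y) = (ad K 𝔤 y).baseChange R :=
    LieModule.toEnd_baseChange K R 𝔤 𝔤 y
  rw [h, LinearMap.charpoly_baseChange, Polynomial.coeff_map]

theorem rank_baseChange (L : Type*) [Field L] [Algebra K L] :
    rank L (L ⊗[K] 𝔤) = rank K 𝔤 := by
  classical
  let b := Module.Free.chooseBasis K 𝔤
  rw [rank_eq_natTrailingDegree K 𝔤 b,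
    rank_eq_natTrailingDegree L (L ⊗[K] 𝔤) (Algebra.TensorProduct.basis L b),
    ← tensorProduct_comp_ad_baseChange, LinearMap.polyCharpoly_baseChange]
  unfold Polynomial.natTrailingDegree Polynomial.trailingDegree
  rw [Polynomial.support_map_of_injective _
    (MvPolynomial.map_injective _ (algebraMap K L).injective)]

theorem engel_sup_range_ad (x : 𝔤) :
    (LieSubalgebra.engel K x).toSubmodule ⊔ LinearMap.range (ad K 𝔤 x) = ⊤ := by
  rw [eq_top_iff, ← (LinearMap.isCompl_iSup_ker_pow_iInf_range_pow (ad K 𝔤 x)).codisjoint.eq_top]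
  refine sup_le_sup (iSup_le fun n y hy ↦ ?_) ((iInf_le _ 1).trans_eq (by rw [pow_one]))
  exact (LieSubalgebra.mem_engel_iff K x y).2 ⟨n, hy⟩

theorem exists_eq_add_lie_of_baseChange_engel (R : Type*) [CommRing R] [Algebra K R] (x : 𝔤)
    (w : R ⊗[K] 𝔤) :
    ∃ e ∈ (LieSubalgebra.engel K x).toSubmodule.baseChange R,
      ∃ c, w = e + ⁅(1 : R) ⊗ₜ[K] x, c⁆ := by
  induction w with
  | zero => exact ⟨0, zero_mem _, 0, by simp⟩
  | add a b ha hb =>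
    obtain ⟨e, he, c, rfl⟩ := ha
    obtain ⟨e', he', c', rfl⟩ := hb
    exact ⟨e + e', add_mem he he', c + c', by rw [lie_add]; abel⟩
  | tmul r y =>
    have hy : y ∈ (LieSubalgebra.engel K x).toSubmodule ⊔ LinearMap.range (ad K 𝔤 x) :=
      engel_sup_range_ad (K := K) x ▸ Submodule.mem_top
    obtain ⟨e, he, _, ⟨c, rfl⟩, rfl⟩ := Submodule.mem_sup.1 hy
    exact ⟨r ⊗ₜ e, Submodule.tmul_mem_baseChange_of_mem r he, r ⊗ₜ c, by simp [tmul_add]⟩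

theorem exists_lieEquiv_add_smul_eq_of_pow_eq_zero [CharZero K] {R : Type*} [CommRing R]
    [Algebra K R] {s : R} {N : ℕ} (hs : s ^ N = 0) (x z : 𝔤) (m : ℕ) :
    ∃ θ : (R ⊗[K] 𝔤) ≃ₗ⁅R⁆ (R ⊗[K] 𝔤),
      ∃ a ∈ (LieSubalgebra.engel K x).toSubmodule.baseChange R, ∃ w,
        θ (1 ⊗ₜ x + s • 1 ⊗ₜ z) = 1 ⊗ₜ x + s • a + s ^ (m + 1) • w := by
  let _ : Algebra ℚ R := ((algebraMap K R).comp (algebraMap ℚ K)).toAlgebra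
  induction m with
  | zero => exact ⟨LieEquiv.refl, 0, zero_mem _, 1 ⊗ₜ z, by simp⟩
  | succ m ih =>
    obtain ⟨θ, a, ha, w, hθ⟩ := ih
    obtain ⟨e, he, c, rfl⟩ := exists_eq_add_lie_of_baseChange_engel R x w
    have hnil : IsNilpotent (ad R (R ⊗[K] 𝔤) (s ^ (m + 1) • c)) := by
      refine ⟨N, ?_⟩
      rw [map_smul, smul_pow, ← pow_mul, mul_comm, pow_mul, hs, zero_pow (by omega), zero_smul]
    -- `exp (s ^ (m + 1) ad c)` removes the term `s ^ (m + 1) ⁅x, c⁆` up to higher order.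
    obtain ⟨η, hη⟩ := exists_lieEquiv_eq_add_lie_add_lie_lie hnil
    obtain ⟨w', hw'⟩ := hη (1 ⊗ₜ x + s • a + s ^ (m + 1) • (e + ⁅(1 : R) ⊗ₜ[K] x, c⁆))
    refine ⟨θ.trans η, a + s ^ m • e, add_mem ha (Submodule.smul_mem _ _ he),
      ⁅c, a⁆ + s ^ m • ⁅c, e + ⁅(1 : R) ⊗ₜ[K] x, c⁆⁆ + s ^ m • ⁅c, ⁅c, w'⁆⁆, ?_⟩
    rw [LieEquiv.trans_apply, hθ, hw']
    simp only [lie_add, smul_lie, lie_smul, smul_add, smul_smul, ← lie_skew (1 ⊗ₜ[K] x) c, lie_neg,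
      smul_neg]
    ring_nf
    abel

theorem aeval_repr_eq_zero_of_mem_baseChange [Infinite K] {V ι : Type*} [AddCommGroup V]
    [Module K V] [Finite ι] (b : Module.Basis ι K V) {P : MvPolynomial ι K} {E : Submodule K V}
    (hP : ∀ y ∈ E, MvPolynomial.aeval (b.repr y) P = 0) (R : Type*) [CommRing R] [Algebra K R]
    {y : R ⊗[K] V} (hy : y ∈ E.baseChange R) :
    MvPolynomial.aeval ((Algebra.TensorProduct.basis R b).repr y) P = 0 := by
  have := b.finiteDimensional_of_finite
  let β := Module.finBasis K E
  have hβ : E.baseChange R = Submodule.span R (Set.range fun j ↦ (1 : R) ⊗ₜ[K] (β j : V)) := by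
    have hspan : E = Submodule.span K (Set.range fun j ↦ (β j : V)) := by
      have := congrArg (Submodule.map E.subtype) β.span_eq
      rwa [Submodule.map_span, Submodule.map_top, Submodule.range_subtype, ← Set.range_comp,
        eq_comm] at this
    conv_lhs => rw [hspan, Submodule.baseChange_span, ← Set.range_comp]
    rfl
  obtain ⟨c, rfl⟩ := (Submodule.mem_span_range_iff_exists_fun R).1 (hβ ▸ hy)
  let Q : MvPolynomial (Fin (Module.finrank K E)) K := MvPolynomial.aeval
    (fun i ↦ ∑ j, MvPolynomial.C (b.repr (β j) i) * MvPolynomial.X j) P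
  have hQ : Q = 0 := MvPolynomial.funext fun v ↦ by
    rw [map_zero, ← hP _ (∑ j, v j • β j).2, ← MvPolynomial.coe_aeval_eq_eval, RingHom.coe_coe,
      ← AlgHom.comp_apply, MvPolynomial.comp_aeval]
    congr 2
    ext i
    simp [mul_comm]
  calc MvPolynomial.aeval ((Algebra.TensorProduct.basis R b).repr
        (∑ j, c j • (1 : R) ⊗ₜ[K] (β j : V))) P
      = MvPolynomial.aeval c Q := by
        rw [← AlgHom.comp_apply, MvPolynomial.comp_aeval]
        congr 2
        ext i
        simp [mul_comm, Algebra.algebraMap_eq_smul_one]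
    _ = 0 := by rw [hQ, map_zero]

theorem coeff_charpoly_ad_add_smul_eq_zero [CharZero K] {R : Type*} [CommRing R] [Algebra K R]
    {s : R} (hs : IsNilpotent s) {x : 𝔤} {n : ℕ}
    (hx : ∀ y ∈ LieSubalgebra.engel K x, (ad K 𝔤 y).charpoly.coeff n = 0) (z : 𝔤) :
    (ad R (R ⊗[K] 𝔤) (1 ⊗ₜ x + s • 1 ⊗ₜ z)).charpoly.coeff n = 0 := by
  classical
  obtain ⟨N, hN⟩ := hs
  obtain ⟨θ, a, ha, w, hθ⟩ := exists_lieEquiv_add_smul_eq_of_pow_eq_zero (K := K) hN x z N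
  rw [pow_succ, hN, zero_mul, zero_smul, add_zero] at hθ
  let b := Module.Free.chooseBasis K 𝔤
  have hmem : (1 : R) ⊗ₜ[K] x + s • a ∈ (LieSubalgebra.engel K x).toSubmodule.baseChange R :=
    add_mem (Submodule.tmul_mem_baseChange_of_mem (1 : R) (LieSubalgebra.self_mem_engel K x))
      (Submodule.smul_mem _ s ha)
  calc (ad R (R ⊗[K] 𝔤) (1 ⊗ₜ x + s • 1 ⊗ₜ z)).charpoly.coeff n
      = (ad R (R ⊗[K] 𝔤) ((1 : R) ⊗ₜ[K] x + s • a)).charpoly.coeff n := by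
        rw [← hθ, ← conj_ad_apply, LinearEquiv.charpoly_conj]
    _ = 0 := by
        rw [coeff_charpoly_ad_eq_aeval R b]
        refine aeval_repr_eq_zero_of_mem_baseChange b (fun y hy ↦ ?_) R hmem
        exact (LinearMap.polyCharpoly_coeff_eval
          (ad K 𝔤 : 𝔤 →ₗ[K] Module.End K 𝔤) b y n).trans (hx y hy)

theorem exists_isRegular_mem_engel [CharZero K] (x : 𝔤) :
    ∃ y ∈ LieSubalgebra.engel K x, IsRegular K y := by
  by_contra! hx
  simp only [isRegular_def, not_not] at hx
  obtain ⟨y, hy⟩ := exists_isRegular K 𝔤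
  -- `p` is the `rank`-th coefficient along the line from `x` to `y`.
  let p : Polynomial K := (ad (Polynomial K) (Polynomial K ⊗[K] 𝔤)
    (1 ⊗ₜ x + (Polynomial.X : Polynomial K) • 1 ⊗ₜ (y - x))).charpoly.coeff (rank K 𝔤)
  have X_pow_dvd (N : ℕ) : Polynomial.X ^ N ∣ p := by
    let φ := Ideal.Quotient.mkₐ K (Ideal.span {(Polynomial.X : Polynomial K) ^ N})
    have hφX : φ Polynomial.X ^ N = 0 := by
      rw [← map_pow]
      exact Ideal.Quotient.eq_zero_iff_mem.2 (Ideal.mem_span_singleton_self _)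
    have hφp : φ p = 0 := by
      rw [map_coeff_charpoly_ad, ← coeff_charpoly_ad_add_smul_eq_zero ⟨N, hφX⟩ hx (y - x)]
      simp [smul_tmul']
    rwa [← Ideal.mem_span_singleton, ← Ideal.Quotient.eq_zero_iff_mem]
  have hp : p = 0 := by
    by_contra hp
    have := Polynomial.natDegree_le_of_dvd (X_pow_dvd (p.natDegree + 1)) hp
    rw [Polynomial.natDegree_X_pow] at this
    omega
  refine (isRegular_def K y).1 hy ?_
  calc (ad K 𝔤 y).charpoly.coeff (rank K 𝔤)
      = (ad K (K ⊗[K] 𝔤) (1 ⊗ₜ y)).charpoly.coeff (rank K 𝔤) := by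
        rw [coeff_charpoly_ad_one_tmul, Algebra.algebraMap_self, RingHom.id_apply]
    _ = Polynomial.aeval (1 : K) p := by
        rw [map_coeff_charpoly_ad, map_add, smul_tmul', LinearMap.rTensor_tmul,
          LinearMap.rTensor_tmul]
        simp [← tmul_add]
    _ = 0 := by rw [hp, map_zero]

end Engel

section Cartan

open LieAlgebra LieSubalgebra Module

variable {K 𝔤 : Type*} [Field K] [LieRing 𝔤] [LieAlgebra K 𝔤]

theorem le_engel_of_isCartanSubalgebra (t : LieSubalgebra K 𝔤) [t.IsCartanSubalgebra] {y : 𝔤}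
    (hy : y ∈ t) : t ≤ engel K y := fun z hz ↦
  (mem_engel_iff K y z).2 <|
    (mem_zeroRootSubalgebra K 𝔤 t z).1 (le_zeroRootSubalgebra K 𝔤 t hz) ⟨y, hy⟩

variable [FiniteDimensional K 𝔤]

theorem engel_le_engel_of_finrank_le [Infinite K] {U : LieSubalgebra K 𝔤} {x : 𝔤} (hx : x ∈ U)
    (hU : U ≤ engel K x) (hmin : ∀ y ∈ U, finrank K (engel K x) ≤ finrank K (engel K y))
    {y : 𝔤} (hy : y ∈ U) : engel K x ≤ engel K y := by
  let Ex : {engel K z | z ∈ U} := ⟨engel K x, x, hx, rfl⟩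
  have hcard : (finrank K 𝔤 : Cardinal) ≤ Cardinal.mk K :=
    Cardinal.natCast_le_aleph0.trans (Cardinal.infinite_iff.mp ‹_›)
  suffices IsBot Ex from @this ⟨engel K y, y, hy, rfl⟩
  refine engel_isBot_of_isMin hcard U Ex hU ?_
  rintro ⟨_, z, hz, rfl⟩ hzx
  have h : engel K z = engel K x :=
    toSubmodule_injective (Submodule.eq_of_le_of_finrank_le hzx (hmin z hz))
  exact h.ge

theorem isCartanSubalgebra_engel_of_isRegular [Infinite K] {x : 𝔤} (hx : IsRegular K x) :
    (engel K x).IsCartanSubalgebra := by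
  refine ⟨isNilpotent_of_forall_le_engel _ fun y hy ↦ ?_, normalizer_engel _ _⟩
  refine engel_le_engel_of_finrank_le (self_mem_engel K x) le_rfl (fun z _ ↦ ?_) hy
  rw [(isRegular_iff_finrank_engel_eq_rank K x).mp hx]
  exact rank_le_finrank_engel K z

theorem finrank_le_rank_of_forall_lie_engel_eq_zero [CharZero K] (x : 𝔤) (W : Submodule K 𝔤)
    (hW : ∀ c ∈ W, ∀ e ∈ engel K x, ⁅e, c⁆ = 0) : finrank K W ≤ rank K 𝔤 := by
  obtain ⟨y, hy, hreg⟩ := exists_isRegular_mem_engel (K := K) x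
  rw [← (isRegular_iff_finrank_engel_eq_rank K y).1 hreg]
  refine Submodule.finrank_mono (t := (engel K y).toSubmodule) fun c hc ↦ ?_
  exact (mem_engel_iff K y c).2 ⟨1, by simpa using hW c hc y hy⟩

variable (t : LieSubalgebra K 𝔤) [t.IsCartanSubalgebra]

theorem exists_engel_eq_of_isCartanSubalgebra [Infinite K] : ∃ x, engel K x = t := by
  obtain ⟨x, hx, hmin⟩ := exists_minimalFor_of_wellFoundedLT (· ∈ t)
    (fun x ↦ finrank K (engel K x)) ⟨0, zero_mem t⟩
  have hmin (y) (hy : y ∈ t) : finrank K (engel K x) ≤ finrank K (engel K y) :=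
    (le_total _ _).elim id (hmin hy)
  have hx_le := le_engel_of_isCartanSubalgebra t hx
  refine ⟨x, le_antisymm (fun z hz ↦ ?_) hx_le⟩
  rw [← zeroRootSubalgebra_eq_of_is_cartan K 𝔤 t, mem_zeroRootSubalgebra]
  exact fun y ↦ (mem_engel_iff K (y : 𝔤) z).1
    (engel_le_engel_of_finrank_le hx hx_le hmin y.2 hz)

theorem finrank_eq_rank_of_isCartanSubalgebra [CharZero K] : finrank K t = rank K 𝔤 := by
  obtain ⟨x, rfl⟩ := exists_engel_eq_of_isCartanSubalgebra t
  obtain ⟨y, hy, hreg⟩ := exists_isRegular_mem_engel (K := K) x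
  refine le_antisymm ?_ (rank_le_finrank_engel K x)
  rw [← (isRegular_iff_finrank_engel_eq_rank K y).1 hreg]
  exact Submodule.finrank_mono (le_engel_of_isCartanSubalgebra (engel K x) hy)

end Cartan

/-! ### Invariant forms on reductive Lie algebras -/

section Reductive

open TensorProduct LieAlgebra LieSubalgebra Module

theorem exists_killingForm_lie_eq {K 𝔮 : Type*} [Field K] [LieRing 𝔮] [LieAlgebra K 𝔮]
    [FiniteDimensional K 𝔮] [IsKilling K 𝔮] (B : LinearMap.BilinForm K 𝔮)
    (hB : ∀ a b c, B ⁅a, b⁆ c = B a ⁅b, c⁆ - B b ⁅a, c⁆) :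
    ∃ s, ∀ a b, B a b = killingForm K 𝔮 s ⁅a, b⁆ := by
  have hnd := IsKilling.killingForm_nondegenerate K 𝔮
  let D : 𝔮 →ₗ[K] 𝔮 := ((killingForm K 𝔮).toDual hnd).symm.toLinearMap ∘ₗ B
  have killingForm_D (a b) : killingForm K 𝔮 (D a) b = B a b :=
    LinearMap.BilinForm.apply_toDual_symm_apply (hB := hnd) (B a) b
  have leibniz (a b) : D ⁅a, b⁆ = ⁅a, D b⁆ - ⁅b, D a⁆ := by
    refine LinearMap.ker_eq_bot.1 (IsKilling.ker_killingForm_eq_bot K 𝔮) (LinearMap.ext fun c ↦ ?_)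
    rw [map_sub, LinearMap.sub_apply, LieModule.traceForm_apply_lie_apply',
      LieModule.traceForm_apply_lie_apply', killingForm_D, killingForm_D, killingForm_D, hB]
    ring
  obtain ⟨s, hs⟩ := LieDerivation.IsKilling.exists_eq_ad
    ({ D with leibniz' := leibniz } : LieDerivation K 𝔮 𝔮)
  refine ⟨s, fun a b ↦ ?_⟩
  have hDs : D a = ⁅s, a⁆ := by
    rw [← ad_apply K, ← LieDerivation.coe_ad_apply_eq_ad_apply, hs]
  rw [← killingForm_D, hDs, LieModule.traceForm_apply_lie_apply]

variable {K 𝔤 : Type*} [Field K] [LieRing 𝔤] [LieAlgebra K 𝔤]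

theorem lie_eq_zero_of_mem_center {z : 𝔤} (hz : z ∈ center K 𝔤) (x : 𝔤) : ⁅z, x⁆ = 0 := by
  rw [← lie_skew, (LieModule.mem_maxTrivSubmodule K 𝔤 𝔤 z).1 hz x, neg_zero]

theorem comap_mk_center_isSolvable (I : LieIdeal K (𝔤 ⧸ center K 𝔤)) [IsLieAbelian I]
    {J : LieIdeal K 𝔤} (hJ : ∀ x ∈ J, (LieSubmodule.Quotient.mk x : 𝔤 ⧸ center K 𝔤) ∈ I) :
    IsSolvable J := by
  have lie_le_center : ⁅J, J⁆ ≤ center K 𝔤 := by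
    refine (LieSubmodule.lie_le_iff ..).2 fun x hx y hy ↦ ?_
    rw [← LieSubmodule.Quotient.mk_eq_zero', LieSubmodule.Quotient.mk_bracket]
    exact congrArg Subtype.val (trivial_lie_zero I I ⟨_, hJ x hx⟩ ⟨_, hJ y hy⟩)
  refine IsSolvable.mk (R := K) (k := 2) ?_
  rw [LieIdeal.derivedSeries_eq_bot_iff]
  refine (LieSubmodule.lie_eq_bot_iff ..).2 fun x hx y _ ↦ ?_
  exact lie_eq_zero_of_mem_center (lie_le_center hx) y

/-- A symmetric bilinear form `c` that vanishes on brackets and whose sum with the Killing form is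
nondegenerate. On a reductive Lie algebra, where the Killing form degenerates exactly along the
center, such a `c` supplies the missing part of a nondegenerate invariant form. -/
structure CompletesKillingForm (c : LinearMap.BilinForm K 𝔤) : Prop where
  isSymm : LinearMap.IsSymm c
  apply_lie (x y z : 𝔤) : c x ⁅y, z⁆ = 0
  nondegenerate : (killingForm K 𝔤 + c).Nondegenerate

theorem CompletesKillingForm.lie_apply {c : LinearMap.BilinForm K 𝔤} (hc : CompletesKillingForm c)
    (x y z : 𝔤) : c ⁅x, y⁆ z = 0 :=
  (hc.isSymm.eq _ _).symm.trans (hc.apply_lie z x y)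

variable [FiniteDimensional K 𝔤]

theorem hasTrivialRadical_quotient_center (hred : radical K 𝔤 = center K 𝔤) :
    HasTrivialRadical K (𝔤 ⧸ center K 𝔤) := by
  refine (hasTrivialRadical_iff_no_abelian_ideals ..).2 fun I hI ↦ ?_
  let J : LieIdeal K 𝔤 :=
    { I.toSubmodule.comap (LieSubmodule.Quotient.mk' (center K 𝔤) : 𝔤 →ₗ[K] 𝔤 ⧸ center K 𝔤) with
      lie_mem := fun {x m} hm ↦ lie_mem_right K _ I (LieSubmodule.Quotient.mk x) _ hm }
  have hJ : IsSolvable J := comap_mk_center_isSolvable I fun _ ↦ id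
  have J_le_center : J ≤ center K 𝔤 := hred ▸ (LieIdeal.solvable_iff_le_radical K 𝔤 J).1 hJ
  refine (_root_.eq_bot_iff).2 fun a ha ↦ ?_
  obtain ⟨x, rfl⟩ := LieSubmodule.Quotient.surjective_mk' (center K 𝔤) a
  exact (LieSubmodule.Quotient.mk_eq_zero (center K 𝔤)).2 (J_le_center ha)

theorem mem_center_of_killingForm_eq_zero [CharZero K] (hred : radical K 𝔤 = center K 𝔤) {x : 𝔤}
    (hx : ∀ y, killingForm K 𝔤 x y = 0) : x ∈ center K 𝔤 := by
  rw [← hred]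
  refine killingCompl_top_le_radical K 𝔤 ((LieIdeal.mem_killingCompl K 𝔤 ⊤).2 fun y _ ↦ ?_)
  rw [LieModule.traceForm_comm, hx]

theorem exists_dual_eq_on_center_and_lie_eq_zero [CharZero K] (hred : radical K 𝔤 = center K 𝔤)
    (f : Dual K 𝔤) :
    ∃ f' : Dual K 𝔤, (∀ z ∈ center K 𝔤, f' z = f z) ∧ ∀ x y : 𝔤, f' ⁅x, y⁆ = 0 := by
  have := hasTrivialRadical_quotient_center hred
  let π : 𝔤 →ₗ[K] 𝔤 ⧸ center K 𝔤 := LieSubmodule.Quotient.mk' (center K 𝔤)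
  let fLie : LinearMap.BilinForm K 𝔤 := (ad K 𝔤 : 𝔤 →ₗ[K] Module.End K 𝔤).compr₂ f
  let B : LinearMap.BilinForm K (𝔤 ⧸ center K 𝔤) :=
    fLie.liftQ₂ (center K 𝔤).toSubmodule (center K 𝔤).toSubmodule
      (fun z hz ↦ LinearMap.ext fun x ↦ by
        simp [fLie, lie_eq_zero_of_mem_center (K := K) (z := z) hz x])
      (fun z hz ↦ LinearMap.ext fun x ↦ by
        simp [fLie, (LieModule.mem_maxTrivSubmodule K 𝔤 𝔤 z).1 hz x])
  have hB (a b c) : B ⁅a, b⁆ c = B a ⁅b, c⁆ - B b ⁅a, c⁆ := by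
    obtain ⟨x, rfl⟩ := LieSubmodule.Quotient.surjective_mk' (center K 𝔤) a
    obtain ⟨y, rfl⟩ := LieSubmodule.Quotient.surjective_mk' (center K 𝔤) b
    obtain ⟨z, rfl⟩ := LieSubmodule.Quotient.surjective_mk' (center K 𝔤) c
    change f ⁅⁅x, y⁆, z⁆ = f ⁅x, ⁅y, z⁆⁆ - f ⁅y, ⁅x, z⁆⁆
    rw [lie_lie, map_sub]
  obtain ⟨s, hs⟩ := exists_killingForm_lie_eq B hB
  refine ⟨f - killingForm K (𝔤 ⧸ center K 𝔤) s ∘ₗ π, fun z hz ↦ ?_, fun x y ↦ ?_⟩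
  · have : π z = 0 := (LieSubmodule.Quotient.mk_eq_zero (center K 𝔤)).2 hz
    simp [this]
  · exact sub_eq_zero.2 (hs (π x) (π y))

theorem exists_completesKillingForm [CharZero K] (hred : radical K 𝔤 = center K 𝔤) :
    ∃ c : LinearMap.BilinForm K 𝔤, CompletesKillingForm c := by
  classical
  let e := Module.Free.chooseBasis K (center K 𝔤).toSubmodule
  have exists_dual (i) : ∃ f : Dual K 𝔤, (∀ z : (center K 𝔤).toSubmodule, f z = e.coord i z) ∧
      ∀ x y : 𝔤, f ⁅x, y⁆ = 0 := by
    obtain ⟨F, hF⟩ := LinearMap.exists_extend (e.coord i)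
    obtain ⟨f, hf_center, hf_lie⟩ := exists_dual_eq_on_center_and_lie_eq_zero hred F
    exact ⟨f, fun z ↦ by rw [hf_center z z.2, ← hF]; rfl, hf_lie⟩
  choose f f_center f_lie using exists_dual
  let c := ∑ i, LinearMap.BilinForm.linMulLin (f i) (f i)
  have c_apply (x y) : c x y = ∑ i, f i x * f i y := by
    simp [c, LinearMap.sum_apply, LinearMap.BilinForm.linMulLin_apply]
  refine ⟨c, ⟨fun x y ↦ by simp [c_apply, mul_comm]⟩, fun x y z ↦ by simp [c_apply, f_lie],
    LinearMap.BilinForm.Nondegenerate.ofSeparatingLeft fun x hx ↦ ?_⟩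
  have f_x (j) : f j x = 0 := by
    have hj : killingForm K 𝔤 x (e j) = 0 := by
      have : ad K 𝔤 (e j : 𝔤) = 0 := LinearMap.ext fun y ↦ lie_eq_zero_of_mem_center (e j).2 y
      rw [killingForm_apply_apply, this, LinearMap.comp_zero, map_zero]
    simpa [hj, c_apply, f_center, Finsupp.single_apply] using hx (e j)
  have hx_center : x ∈ center K 𝔤 :=
    mem_center_of_killingForm_eq_zero hred fun y ↦ by simpa [c_apply, f_x] using hx y
  have : (⟨x, hx_center⟩ : (center K 𝔤).toSubmodule) = 0 :=
    e.ext_elem fun i ↦ by simpa [f_x] using (f_center i ⟨x, hx_center⟩).symm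
  exact congrArg Subtype.val this

namespace CompletesKillingForm

variable {c : LinearMap.BilinForm K 𝔤}

theorem isLieAbelian_engel_of_isRegular [CharZero K] (hc : CompletesKillingForm c) {y : 𝔤}
    (hy : IsRegular K y) : IsLieAbelian (engel K y) := by
  have := isCartanSubalgebra_engel_of_isRegular hy
  change LieModule.IsTrivial (engel K y) (engel K y)
  rw [← LieModule.disjoint_lowerCentralSeries_maxTrivSubmodule_iff K (engel K y) (engel K y),
    disjoint_iff_inf_le]
  intro z hz
  have lie_z : ⁅y, (z : 𝔤)⁆ = 0 :=
    congrArg Subtype.val ((LieModule.mem_maxTrivSubmodule ..).1 hz.2 ⟨y, self_mem_engel K y⟩)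
  have killing_z (w : 𝔤) : killingForm K 𝔤 z w = 0 := by
    have hw : w ∈ (engel K y).toSubmodule ⊔ LinearMap.range (ad K 𝔤 y) :=
      engel_sup_range_ad (K := K) y ▸ Submodule.mem_top
    obtain ⟨e, he, _, ⟨w', rfl⟩, rfl⟩ := Submodule.mem_sup.1 hw
    have hze : killingForm K 𝔤 z e = 0 := LinearMap.congr_fun
      (LieModule.lowerCentralSeries_one_inf_center_le_ker_traceForm K (engel K y) 𝔤 hz) ⟨e, he⟩
    rw [map_add, hze, ad_apply, ← LieModule.traceForm_apply_lie_apply, ← lie_skew, lie_z]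
    simp
  have c_z (w : 𝔤) : c z w = 0 := by
    have hz1 : z ∈ LieModule.lowerCentralSeries K (engel K y) (engel K y) 1 := hz.1
    rw [LieModule.lowerCentralSeries_succ, LieModule.lowerCentralSeries_zero,
      ← LieSubmodule.mem_toSubmodule, LieSubmodule.lieIdeal_oper_eq_linear_span'] at hz1
    refine (Submodule.span_le (p := LinearMap.ker ((c.flip w).domRestrict _))).2 ?_ hz1
    rintro _ ⟨a, -, b, -, rfl⟩
    exact hc.lie_apply a b w
  refine (LieSubmodule.mem_bot z).2 (Subtype.ext (hc.nondegenerate.1 z fun w ↦ ?_))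
  rw [LinearMap.add_apply, LinearMap.add_apply, killing_z, c_z, add_zero]

theorem mem_engel_iff_lie_eq_zero [CharZero K] (hc : CompletesKillingForm c) {y : 𝔤}
    (hy : IsRegular K y) {z : 𝔤} : z ∈ engel K y ↔ ⁅y, z⁆ = 0 where
  mp hz := congrArg Subtype.val <|
    (hc.isLieAbelian_engel_of_isRegular hy).trivial ⟨y, self_mem_engel K y⟩ ⟨z, hz⟩
  mpr h := (mem_engel_iff K y z).2 ⟨1, by simpa using h⟩

protected theorem baseChange (hc : CompletesKillingForm c) (L : Type*) [Field L] [Algebra K L] :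
    CompletesKillingForm (c.baseChange L) where
  isSymm := LinearMap.BilinForm.IsSymm.baseChange L hc.isSymm
  apply_lie x y z := by
    induction x with
    | zero => simp
    | add x x' hx hx' => rw [map_add, LinearMap.add_apply, hx, hx', add_zero]
    | tmul a x =>
    induction y with
    | zero => simp
    | add y y' hy hy' => rw [add_lie, map_add, hy, hy', add_zero]
    | tmul b y =>
    induction z with
    | zero => simp
    | add z z' hz hz' => rw [lie_add, map_add, hz, hz', add_zero]
    | tmul r z =>
    rw [ExtendScalars.bracket_tmul, LinearMap.BilinForm.baseChange_tmul, hc.apply_lie, zero_smul]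
  nondegenerate := by
    classical
    let b := Module.Free.chooseBasis K 𝔤
    let bL := Algebra.TensorProduct.basis L b
    have hmatrix : LinearMap.BilinForm.toMatrix bL
        (killingForm L (L ⊗[K] 𝔤) + c.baseChange L) =
          (LinearMap.BilinForm.toMatrix b (killingForm K 𝔤 + c)).map (algebraMap K L) := by
      ext i j
      simp [bL, killingForm, LieModule.traceForm_baseChange, Algebra.algebraMap_eq_smul_one,
        add_smul]
    have hdet := (LinearMap.BilinForm.nondegenerate_iff_det_ne_zero b).1 hc.nondegenerate
    rw [LinearMap.BilinForm.nondegenerate_iff_det_ne_zero bL, hmatrix,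
      ← RingHom.mapMatrix_apply, ← RingHom.map_det]
    exact (map_ne_zero _).2 hdet

end CompletesKillingForm

end Reductive

/-! ### Connections along a derivation -/

section Connection

open Module

/-- A connection along the derivation `D` of the field `L`: an additive endomorphism `∇` of an
`L`-vector space with `∇ (a • v) = D a • v + a • ∇ v`. -/
structure ConnectionAlong {R L : Type*} [CommRing R] [Field L] [Algebra R L] (D : Derivation R L L)
    (V : Type*) [AddCommGroup V] [Module L V] extends V →+ V where
  map_smul' : ∀ (a : L) (v : V), toFun (a • v) = D a • v + a • toFun v

namespace ConnectionAlong

variable {R L V : Type*} [CommRing R] [Field L] [Algebra R L] {D : Derivation R L L}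
  [AddCommGroup V] [Module L V]

instance : FunLike (ConnectionAlong D V) V V where
  coe nabla := nabla.toFun
  coe_injective := fun ⟨_, _⟩ ⟨_, _⟩ h ↦ by congr; exact DFunLike.coe_injective h

instance : AddMonoidHomClass (ConnectionAlong D V) V V where
  map_add nabla := nabla.map_add'
  map_zero nabla := nabla.map_zero'

theorem map_smul_eq (nabla : ConnectionAlong D V) (a : L) (v : V) :
    nabla (a • v) = D a • v + a • nabla v :=
  nabla.map_smul' a v

/-- The connection `∇ + Γ`, for a linear endomorphism `Γ`. -/
def addEnd (nabla : ConnectionAlong D V) (Γ : End L V) : ConnectionAlong D V where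
  __ := nabla.toAddMonoidHom + Γ.toAddMonoidHom
  map_smul' a v := by
    change nabla (a • v) + Γ (a • v) = D a • v + a • (nabla v + Γ v)
    rw [map_smul_eq, map_smul, smul_add, add_assoc]

theorem addEnd_apply (nabla : ConnectionAlong D V) (Γ : End L V) (v : V) :
    nabla.addEnd Γ v = nabla v + Γ v := rfl

theorem exists_eq_addEnd (nabla nabla' : ConnectionAlong D V) : ∃ Γ, nabla' = nabla.addEnd Γ := by
  let Γ : End L V :=
    { toFun := fun v ↦ nabla' v - nabla v
      map_add' := fun v w ↦ by rw [map_add, map_add]; abel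
      map_smul' := fun a v ↦ by rw [map_smul_eq, map_smul_eq, RingHom.id_apply]; module }
  exact ⟨Γ, DFunLike.ext _ _ fun v ↦ (add_sub_cancel (nabla v) (nabla' v)).symm⟩

/-- The covariant derivative `[∇, A] = ∇ ∘ A - A ∘ ∇` of an endomorphism `A`. -/
def covDeriv (nabla : ConnectionAlong D V) (A : End L V) : End L V where
  toFun v := nabla (A v) - A (nabla v)
  map_add' v w := by simp only [map_add]; abel
  map_smul' a v := by
    simp only [map_smul, map_smul_eq, map_add, RingHom.id_apply]; module

theorem covDeriv_apply (nabla : ConnectionAlong D V) (A : End L V) (v : V) :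
    nabla.covDeriv A v = nabla (A v) - A (nabla v) := rfl

theorem covDeriv_add (nabla : ConnectionAlong D V) (A B : End L V) :
    nabla.covDeriv (A + B) = nabla.covDeriv A + nabla.covDeriv B := by
  ext v
  simp only [covDeriv_apply, LinearMap.add_apply, map_add]
  abel

theorem covDeriv_addEnd (nabla : ConnectionAlong D V) (Γ A : End L V) :
    (nabla.addEnd Γ).covDeriv A = nabla.covDeriv A + (Γ * A - A * Γ) := by
  ext v
  simp only [covDeriv_apply, addEnd_apply, LinearMap.add_apply, LinearMap.sub_apply,
    Module.End.mul_apply, map_add]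
  abel

theorem trace_covDeriv_mul_eq (nabla nabla' : ConnectionAlong D V) {A B : End L V}
    (hAB : Commute A B) :
    LinearMap.trace L V (nabla.covDeriv A * B) = LinearMap.trace L V (nabla'.covDeriv A * B) := by
  obtain ⟨Γ, rfl⟩ := exists_eq_addEnd nabla nabla'
  have h : LinearMap.trace L V (A * Γ * B) = LinearMap.trace L V (Γ * A * B) := by
    rw [mul_assoc, LinearMap.trace_mul_comm, mul_assoc, ← hAB.eq, mul_assoc]
  rw [covDeriv_addEnd, add_mul, map_add, sub_mul, map_sub, h, sub_self, add_zero]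

/-- The connection for which the vectors of the basis `b` are horizontal. -/
def ofBasis {ι : Type*} (D : Derivation R L L) (b : Basis ι L V) : ConnectionAlong D V where
  __ := (b.repr.symm : (ι →₀ L) →+ V).comp
    ((Finsupp.mapRange.addMonoidHom (D : L →+ L)).comp (b.repr : V →+ ι →₀ L))
  map_smul' a v := by
    refine b.ext_elem fun i ↦ ?_
    simp [add_comm, mul_comm (D a)]

theorem ofBasis_smul_apply {ι : Type*} (b : Basis ι L V) (a : L) (i : ι) :
    ofBasis D b (a • b i) = D a • b i := by
  have : ofBasis D b (b i) = 0 := by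
    change b.repr.symm (Finsupp.mapRange D (map_zero D) (b.repr (b i))) = 0
    simp
  rw [map_smul_eq, this, smul_zero, add_zero]

theorem exists_forall_mem_of_monotone (nabla : ConnectionAlong D V) {F : ℕ → Submodule L V}
    (hF : Monotone F) (m : ℕ) :
    ∃ nabla' : ConnectionAlong D V, ∀ j < m, ∀ v ∈ F j, nabla' v ∈ F j := by
  induction m with
  | zero => exact ⟨nabla, by simp⟩
  | succ m ih =>
    obtain ⟨nabla, hnabla⟩ := ih
    obtain ⟨q, hq⟩ := (F m).exists_isCompl
    let p := (F m).projection q hq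
    have hp : LinearMap.IsProj (F m) p :=
      ⟨Submodule.projection_apply_mem hq, fun v hv ↦ (Submodule.projection_eq_self_iff hq v).2 hv⟩
    -- Subtract from `∇` the part `(1 - p) ∘ ∇ ∘ p`, which is linear since `(1 - p) ∘ p = 0`.
    let Γ : End L V :=
      { toFun := fun v ↦ p (nabla (p v)) - nabla (p v)
        map_add' := fun v w ↦ by simp only [map_add]; abel
        map_smul' := fun a v ↦ by
          have : p (p v) = p v := hp.map_id _ (hp.map_mem v)
          simp only [map_smul, map_smul_eq, map_add, this, RingHom.id_apply]
          module }
    have addEnd_Γ {v : V} (hv : v ∈ F m) : nabla.addEnd Γ v = p (nabla v) := by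
      change nabla v + (p (nabla (p v)) - nabla (p v)) = _
      rw [hp.map_id v hv, add_sub_cancel]
    refine ⟨nabla.addEnd Γ, fun j hj v hv ↦ ?_⟩
    rw [addEnd_Γ (hF (Nat.lt_succ_iff.1 hj) hv)]
    rcases (Nat.lt_succ_iff.1 hj).eq_or_lt with rfl | hj
    · exact hp.map_mem _
    · have hv' := hnabla j hj v hv
      rwa [hp.map_id _ (hF hj.le hv')]

theorem trace_covDeriv_mul_of_apply_basis {ι : Type*} (nabla : ConnectionAlong D V)
    (b : Basis ι L V) {μ : ι → L} {s w B : End L V} (hs : ∀ i, s (b i) = μ i • b i)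
    (hw : ∀ i, w (b i) = D (μ i) • b i) (hsB : Commute s B) :
    LinearMap.trace L V (nabla.covDeriv s * B) = LinearMap.trace L V (w * B) := by
  have : (ofBasis D b).covDeriv s = w := b.ext fun i ↦ by
    have h : ofBasis D b (b i) = 0 := by simpa using ofBasis_smul_apply (D := D) b 1 i
    rw [covDeriv_apply, hs, hw, ofBasis_smul_apply, h, map_zero, sub_zero]
  rw [trace_covDeriv_mul_eq nabla (ofBasis D b) hsB, this]

theorem trace_covDeriv_mul_of_isNilpotent (nabla : ConnectionAlong D V) {n B : End L V}
    (hn : IsNilpotent n) (hnB : Commute n B) : LinearMap.trace L V (nabla.covDeriv n * B) = 0 := by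
  obtain ⟨N, hN⟩ := hn
  obtain ⟨nabla', hnabla'⟩ := nabla.exists_forall_mem_of_monotone
    (F := fun j ↦ LinearMap.ker (n ^ j)) n.iterateKer.monotone (N + 1)
  rw [trace_covDeriv_mul_eq nabla nabla' hnB]
  have apply_mem_ker_pow {j : ℕ} (hj : j < N) {v : V} (hv : v ∈ LinearMap.ker (n ^ (j + 1))) :
      (nabla'.covDeriv n * B) v ∈ LinearMap.ker (n ^ j) := by
    have hBv : B v ∈ LinearMap.ker (n ^ (j + 1)) := by
      rw [LinearMap.mem_ker, ← Module.End.mul_apply, (hnB.pow_left _).eq, Module.End.mul_apply, hv,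
        map_zero]
    rw [Module.End.mul_apply, covDeriv_apply]
    refine sub_mem (hnabla' j (by lia) _ ?_) ?_ <;>
      rw [LinearMap.mem_ker, ← Module.End.mul_apply, ← pow_succ]
    exacts [hBv, hnabla' (j + 1) (by lia) _ hBv]
  have pow_apply_eq_zero (j : ℕ) : j ≤ N → ∀ v ∈ LinearMap.ker (n ^ j),
      ((nabla'.covDeriv n * B) ^ j) v = 0 := by
    induction j with
    | zero => exact fun _ v hv ↦ hv
    | succ j ih =>
      intro hj v hv
      rw [pow_succ, Module.End.mul_apply]
      exact ih (by lia) _ (apply_mem_ker_pow hj hv)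
  have hnilp : IsNilpotent (nabla'.covDeriv n * B) :=
    ⟨N, LinearMap.ext fun v ↦ pow_apply_eq_zero N le_rfl v (by rw [hN]; exact rfl)⟩
  exact (LinearMap.isNilpotent_trace_of_isNilpotent hnilp).eq_zero

end ConnectionAlong

end Connection

section GenEigenspace

open Module

variable {L V : Type*} [Field L] [AddCommGroup V] [Module L V]

/-- `w` acts as the scalar `d μ` on the generalized eigenspace of `A` for `μ`. With `d = id` this
is the semisimple part of `A`; with `d` a derivation, `w` is the derivative of the eigenvalues. -/
def ActsOnGenEigenspaces (A : End L V) (d : L → L) (w : End L V) : Prop :=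
  ∀ μ, ∀ v ∈ A.maxGenEigenspace μ, w v = d μ • v

variable [IsAlgClosed L] [FiniteDimensional L V]

theorem exists_basis_mem_maxGenEigenspace (A : End L V) :
    ∃ (b : Basis (Fin (finrank L V)) L V) (μ : Fin (finrank L V) → L),
      ∀ i, b i ∈ A.maxGenEigenspace (μ i) := by
  have hspan : ⊤ ≤ Submodule.span L (⋃ μ, (A.maxGenEigenspace μ : Set V)) := by
    rw [← A.iSup_maxGenEigenspace_eq_top, Submodule.iSup_eq_span]
  let b := Basis.ofSpan hspan
  let e := Fintype.equivFinOfCardEq (finrank_eq_card_basis b).symm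
  have hb (i) : ∃ μ, b.reindex e i ∈ A.maxGenEigenspace μ := by
    rw [Basis.reindex_apply]
    exact Set.mem_iUnion.1 (Basis.ofSpan_subset hspan ⟨_, rfl⟩)
  choose μ hμ using hb
  exact ⟨_, μ, hμ⟩

theorem exists_actsOnGenEigenspaces (A : End L V) (d : L → L) :
    ∃ w, ActsOnGenEigenspaces A d w := by
  classical
  have hA : DirectSum.IsInternal fun μ ↦ A.maxGenEigenspace μ :=
    DirectSum.isInternal_submodule_of_iSupIndep_of_iSup_eq_top
      A.independent_maxGenEigenspace A.iSup_maxGenEigenspace_eq_top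
  let e := LinearEquiv.ofBijective (DirectSum.coeLinearMap fun μ ↦ A.maxGenEigenspace μ) hA
  refine ⟨DirectSum.toModule L L V (fun μ ↦ d μ • (A.maxGenEigenspace μ).subtype) ∘ₗ
    e.symm.toLinearMap, fun μ v hv ↦ ?_⟩
  have : e.symm v = DirectSum.lof L L (fun μ ↦ A.maxGenEigenspace μ) μ ⟨v, hv⟩ :=
    e.symm_apply_eq.2 (DirectSum.coeLinearMap_lof (fun μ ↦ A.maxGenEigenspace μ) μ ⟨v, hv⟩).symm
  rw [LinearMap.comp_apply, LinearEquiv.coe_coe, this, DirectSum.toModule_lof]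
  rfl

namespace ActsOnGenEigenspaces

variable {A w B : End L V} {d : L → L}

theorem commute (hw : ActsOnGenEigenspaces A d w)
    (hB : ∀ μ, Set.MapsTo B (A.maxGenEigenspace μ) (A.maxGenEigenspace μ)) : Commute w B := by
  obtain ⟨b, μ, hb⟩ := exists_basis_mem_maxGenEigenspace A
  refine b.ext fun i ↦ ?_
  rw [Module.End.mul_apply, Module.End.mul_apply, hw _ _ (hb i), hw _ _ (hB _ (hb i)), map_smul]

theorem isNilpotent_sub (hw : ActsOnGenEigenspaces A id w) : IsNilpotent (A - w) := by
  have mapsTo (μ) := Module.End.mapsTo_maxGenEigenspace_of_comm (Commute.refl A) μ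
  have pow_apply (m : ℕ) {μ : L} {v : V} (hv : v ∈ A.maxGenEigenspace μ) :
      ((A - w) ^ m) v = ((A - μ • 1) ^ m) v := by
    induction m generalizing v with
    | zero => rfl
    | succ m ih =>
      have hv' : (A - w) v = (A - μ • 1) v := by simp [hw μ v hv]
      rw [pow_succ, pow_succ, Module.End.mul_apply, Module.End.mul_apply, hv']
      exact ih (sub_mem (mapsTo μ hv) (Submodule.smul_mem _ _ hv))
  obtain ⟨b, μ, hb⟩ := exists_basis_mem_maxGenEigenspace A
  refine ⟨finrank L V, b.ext fun i ↦ ?_⟩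
  rw [pow_apply _ (hb i), LinearMap.zero_apply]
  have := hb i
  rwa [Module.End.maxGenEigenspace_eq_genEigenspace_finrank, Module.End.mem_genEigenspace_nat,
    LinearMap.mem_ker] at this

end ActsOnGenEigenspaces

theorem ConnectionAlong.trace_covDeriv_mul {R : Type*} [CommRing R] [Algebra R L]
    {D : Derivation R L L} (nabla : ConnectionAlong D V) {A B w : End L V} (hAB : Commute A B)
    (hw : ActsOnGenEigenspaces A D w) :
    LinearMap.trace L V (nabla.covDeriv A * B) = LinearMap.trace L V (w * B) := by
  obtain ⟨s, hs⟩ := exists_actsOnGenEigenspaces A id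
  obtain ⟨b, μ, hb⟩ := exists_basis_mem_maxGenEigenspace A
  have hsB : Commute s B :=
    hs.commute fun μ ↦ Module.End.mapsTo_maxGenEigenspace_of_comm hAB μ
  calc LinearMap.trace L V (nabla.covDeriv A * B)
      = LinearMap.trace L V (nabla.covDeriv (A - s) * B) +
          LinearMap.trace L V (nabla.covDeriv s * B) := by
        rw [← map_add, ← add_mul, ← covDeriv_add, sub_add_cancel]
    _ = LinearMap.trace L V (w * B) := by
        rw [nabla.trace_covDeriv_mul_of_isNilpotent hs.isNilpotent_sub (hAB.sub_left hsB), zero_add,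
          nabla.trace_covDeriv_mul_of_apply_basis b (fun i ↦ hs _ _ (hb i))
            (fun i ↦ hw _ _ (hb i)) hsB]

end GenEigenspace

section Tangent

open TensorProduct LieAlgebra LieSubalgebra Module

namespace ConnectionAlong

section BaseChange

variable {K L V 𝔤 : Type*} [Field K] [Field L] [Algebra K L] [AddCommGroup V] [Module K V]
  [LieRing 𝔤] [LieAlgebra K 𝔤]

variable (V) in
/-- The connection `D ⊗ id` on `L ⊗ V`. -/
def baseChange (D : Derivation K L L) : ConnectionAlong D (L ⊗[K] V) where
  __ := ((D : L →ₗ[K] L).rTensor V).toAddMonoidHom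
  map_smul' a v := by
    change (D : L →ₗ[K] L).rTensor V (a • v) = D a • v + a • (D : L →ₗ[K] L).rTensor V v
    induction v with
    | zero => simp
    | add v w hv hw => rw [smul_add, map_add, hv, hw, map_add]; module
    | tmul l v =>
      simp only [smul_tmul', LinearMap.rTensor_tmul, smul_eq_mul, Derivation.coeFn_coe,
        Derivation.leibniz, ← add_tmul]
      congr 1; ring

theorem baseChange_tmul (D : Derivation K L L) (a : L) (v : V) :
    baseChange V D (a ⊗ₜ v) = D a ⊗ₜ v := rfl

theorem baseChange_lie (D : Derivation K L L) (x y : L ⊗[K] 𝔤) :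
    baseChange 𝔤 D ⁅x, y⁆ = ⁅baseChange 𝔤 D x, y⁆ + ⁅x, baseChange 𝔤 D y⁆ := by
  induction x with
  | zero => simp
  | add x x' hx hx' => rw [add_lie, map_add, hx, hx', map_add, add_lie, add_lie]; abel
  | tmul a x =>
  induction y with
  | zero => simp
  | add y y' hy hy' => rw [lie_add, map_add, hy, hy', map_add, lie_add, lie_add]; abel
  | tmul b y =>
  simp only [ExtendScalars.bracket_tmul, baseChange_tmul, Derivation.leibniz, ← add_tmul,
    smul_eq_mul]
  congr 1; ring

end BaseChange

theorem covDeriv_ad {R L G : Type*} [CommRing R] [Field L] [Algebra R L] {D : Derivation R L L}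
    [LieRing G] [LieAlgebra L G] {nabla : ConnectionAlong D G}
    (hnabla : ∀ x y : G, nabla ⁅x, y⁆ = ⁅nabla x, y⁆ + ⁅x, nabla y⁆) (x : G) :
    nabla.covDeriv (ad L G x) = ad L G (nabla x) := by
  ext y
  rw [covDeriv_apply, ad_apply, ad_apply, ad_apply, hnabla, add_sub_cancel_right]

end ConnectionAlong

variable {L G : Type*} [Field L] [LieRing G] [LieAlgebra L G]

theorem mapsTo_ad_maxGenEigenspace_of_mem_engel {x e : G} (he : e ∈ engel L x) (μ : L) :
    Set.MapsTo (ad L G e) ((ad L G x).maxGenEigenspace μ) ((ad L G x).maxGenEigenspace μ) := by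
  intro v hv
  have he0 : e ∈ (LieModule.toEnd L G G x).maxGenEigenspace 0 := by
    obtain ⟨n, hn⟩ := (mem_engel_iff L x e).1 he
    refine (Module.End.mem_maxGenEigenspace _ _ _).2 ⟨n, ?_⟩
    rw [zero_smul, sub_zero]
    exact hn
  have := LieModule.lie_mem_maxGenEigenspace_toEnd he0 hv
  rwa [zero_add] at this

theorem commute_ad_of_lie_eq_zero {x z : G} (h : ⁅x, z⁆ = 0) :
    Commute (ad L G x) (ad L G z) := by
  ext v
  simp [leibniz_lie x z v, h]

namespace CompletesKillingForm

variable {c : LinearMap.BilinForm L G}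

theorem killingForm_add_lie_apply (hc : CompletesKillingForm c) (x y z : G) :
    (killingForm L G + c) ⁅x, y⁆ z = (killingForm L G + c) x ⁅y, z⁆ := by
  simp only [LinearMap.add_apply, hc.lie_apply, hc.apply_lie, LieModule.traceForm_apply_lie_apply]

theorem lie_eq_zero_of_forall_apply_lie_eq_zero (hc : CompletesKillingForm c) {x y : G}
    (h : ∀ z, (killingForm L G + c) x ⁅y, z⁆ = 0) : ⁅x, y⁆ = 0 :=
  hc.nondegenerate.1 _ fun z ↦ by rw [hc.killingForm_add_lie_apply, h]

variable [FiniteDimensional L G]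

theorem mem_range_ad_of_forall_apply_eq_zero (hc : CompletesKillingForm c) {x u : G}
    (hu : ∀ z, ⁅x, z⁆ = 0 → (killingForm L G + c) u z = 0) : u ∈ LinearMap.range (ad L G x) := by
  rw [← Subspace.forall_mem_dualAnnihilator_apply_eq_zero_iff]
  intro f hf
  let q := (LinearMap.BilinForm.toDual (killingForm L G + c) hc.nondegenerate).symm f
  have hq (z) : (killingForm L G + c) q z = f z :=
    LinearMap.BilinForm.apply_toDual_symm_apply (hB := hc.nondegenerate) f z
  have lie_q : ⁅q, x⁆ = 0 := hc.lie_eq_zero_of_forall_apply_lie_eq_zero fun z ↦ by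
    rw [hq]
    exact (Submodule.mem_dualAnnihilator f).1 hf _ ⟨z, rfl⟩
  have hsymm : (killingForm L G + c) q u = (killingForm L G + c) u q := by
    rw [LinearMap.add_apply, LinearMap.add_apply, LinearMap.add_apply, LinearMap.add_apply,
      LieModule.traceForm_comm, ← hc.isSymm.eq, RingHom.id_apply]
  rw [← hq, hsymm, hu q (by rw [← lie_skew, lie_q, neg_zero])]

theorem exists_apply_eq_trace_mul_ad_add (hc : CompletesKillingForm c) (w : End L G) (u : G) :
    ∃ p, (∀ z, (killingForm L G + c) p z = LinearMap.trace L G (w * ad L G z) + c u z) ∧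
      ∀ e, Commute w (ad L G e) → ⁅e, p⁆ = 0 := by
  let φ : Dual L G := LinearMap.trace L G ∘ₗ LinearMap.mulLeft L w ∘ₗ
    (ad L G : G →ₗ[L] End L G) + c u
  let p := (LinearMap.BilinForm.toDual (killingForm L G + c) hc.nondegenerate).symm φ
  have hp (z) : (killingForm L G + c) p z = LinearMap.trace L G (w * ad L G z) + c u z :=
    LinearMap.BilinForm.apply_toDual_symm_apply (hB := hc.nondegenerate) φ z
  refine ⟨p, hp, fun e he ↦ ?_⟩
  rw [← lie_skew, neg_eq_zero]
  refine hc.lie_eq_zero_of_forall_apply_lie_eq_zero fun z ↦ ?_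
  have had : ad L G ⁅e, z⁆ = ad L G e * ad L G z - ad L G z * ad L G e := by
    ext v
    simp
  rw [hp, hc.apply_lie, add_zero, had, mul_sub, map_sub, ← mul_assoc, he.eq, mul_assoc,
    LinearMap.trace_mul_comm, mul_assoc, sub_self]

theorem exists_connection_apply_eq_lie_add [IsAlgClosed L] {R : Type*} [CommRing R] [Algebra R L]
    {D : Derivation R L L} (hc : CompletesKillingForm c) {nabla : ConnectionAlong D G}
    (hnabla : ∀ x y : G, nabla ⁅x, y⁆ = ⁅nabla x, y⁆ + ⁅x, nabla y⁆) (x : G) :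
    ∃ a p, nabla x = ⁅x, a⁆ + p ∧ ∀ e ∈ engel L x, ⁅e, p⁆ = 0 := by
  obtain ⟨w, hw⟩ := exists_actsOnGenEigenspaces (ad L G x) D
  obtain ⟨p, hp, lie_p⟩ := hc.exists_apply_eq_trace_mul_ad_add w (nabla x)
  have killingForm_nabla {z : G} (hz : ⁅x, z⁆ = 0) :
      killingForm L G (nabla x) z = LinearMap.trace L G (w * ad L G z) := by
    rw [killingForm_apply_apply, ← ConnectionAlong.covDeriv_ad hnabla]
    exact nabla.trace_covDeriv_mul (commute_ad_of_lie_eq_zero hz) hw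
  obtain ⟨a, ha⟩ := hc.mem_range_ad_of_forall_apply_eq_zero (x := x) (u := nabla x - p)
    fun z hz ↦ by
      rw [map_sub, LinearMap.sub_apply, hp, LinearMap.add_apply, LinearMap.add_apply,
        killingForm_nabla hz, sub_self]
  refine ⟨a, p, ?_, fun e he ↦ lie_p e (hw.commute (mapsTo_ad_maxGenEigenspace_of_mem_engel he))⟩
  rw [← ad_apply L, ha, sub_add_cancel]

end CompletesKillingForm

theorem finrank_prod_le_of_fst_of_ker {U V : Type*} [AddCommGroup U] [Module L U]
    [AddCommGroup V] [Module L V] [FiniteDimensional L U] [FiniteDimensional L V]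
    (T : Submodule L (U × V)) {P : Submodule L U} {Q : Submodule L V}
    (hP : ∀ p ∈ T, p.1 ∈ P) (hQ : ∀ v, (0, v) ∈ T → v ∈ Q) :
    finrank L T ≤ finrank L P + finrank L Q := by
  let f : T →ₗ[L] U := LinearMap.fst L U V ∘ₗ T.subtype
  have hrange : finrank L (LinearMap.range f) ≤ finrank L P :=
    Submodule.finrank_mono (LinearMap.range_le_iff_comap.2 (eq_top_iff.2 fun p _ ↦ hP p p.2))
  let h : LinearMap.ker f →ₗ[L] V := LinearMap.snd L U V ∘ₗ T.subtype ∘ₗ (LinearMap.ker f).subtype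
  have hker_fst (p : LinearMap.ker f) : p.1.1.1 = 0 := p.2
  have h_inj : Function.Injective h := fun p q hpq ↦
    Subtype.ext (Subtype.ext (Prod.ext ((hker_fst p).trans (hker_fst q).symm) hpq))
  have hker : finrank L (LinearMap.ker f) ≤ finrank L Q := by
    rw [← LinearMap.finrank_range_of_inj h_inj]
    refine Submodule.finrank_mono (LinearMap.range_le_iff_comap.2 (eq_top_iff.2 fun p _ ↦ hQ _ ?_))
    rw [← hker_fst p]
    exact p.1.2
  rw [← f.finrank_range_add_finrank_ker]
  exact add_le_add hrange hker

/-- The elements of `G` that commute with the whole Engel subalgebra of `x`. -/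
def engelCentralizer (L : Type*) {G : Type*} [Field L] [LieRing G] [LieAlgebra L G] (x : G) :
    Submodule L G where
  carrier := {p | ∀ e ∈ engel L x, ⁅e, p⁆ = 0}
  add_mem' ha hb e he := by rw [lie_add, ha e he, hb e he, add_zero]
  zero_mem' e _ := lie_zero e
  smul_mem' a p hp e he := by rw [lie_smul, hp e he, smul_zero]

theorem finrank_le_of_lie_snd_eq_lie_fst [CharZero L] [FiniteDimensional L G] {x y : G}
    (T : Submodule L (G × G))
    (hfst : ∀ p ∈ T, p.1 ∈ LinearMap.range (ad L G x) ⊔ engelCentralizer L x)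
    (hlie : ∀ p ∈ T, ⁅x, p.2⁆ = ⁅y, p.1⁆) : finrank L T ≤ finrank L G + rank L G := by
  have hker (v) (hv : (0, v) ∈ T) : v ∈ LinearMap.ker (ad L G x) := by simpa using hlie _ hv
  calc finrank L T
      ≤ finrank L ↥(LinearMap.range (ad L G x) ⊔ engelCentralizer L x) +
          finrank L (LinearMap.ker (ad L G x)) := finrank_prod_le_of_fst_of_ker T hfst hker
    _ ≤ finrank L (LinearMap.range (ad L G x)) + finrank L (engelCentralizer L x) +
          finrank L (LinearMap.ker (ad L G x)) := by
        gcongr; exact Submodule.finrank_add_le_finrank_add_finrank _ _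
    _ = finrank L G + finrank L (engelCentralizer L x) := by
        rw [← (ad L G x).finrank_range_add_finrank_ker]; ring
    _ ≤ finrank L G + rank L G := by
        gcongr; exact finrank_le_rank_of_forall_lie_engel_eq_zero x _ fun p hp ↦ hp

theorem le_finrank_add_rank_of_linearIndependent_connection {K 𝔤 : Type*} [Field K] [CharZero K]
    [IsAlgClosed L] [Algebra K L] [LieRing 𝔤] [LieAlgebra K 𝔤] [FiniteDimensional K 𝔤]
    (hred : radical K 𝔤 = center K 𝔤) {x y : L ⊗[K] 𝔤} (hxy : ⁅x, y⁆ = 0) {ι : Type*} [Fintype ι]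
    {D : ι → Derivation K L L}
    (hD : LinearIndependent L fun i ↦
      (ConnectionAlong.baseChange 𝔤 (D i) x, ConnectionAlong.baseChange 𝔤 (D i) y)) :
    Fintype.card ι ≤ finrank K 𝔤 + rank K 𝔤 := by
  have : CharZero L := charZero_of_injective_algebraMap (algebraMap K L).injective
  obtain ⟨c, hc⟩ := exists_completesKillingForm hred
  rw [← finrank_span_eq_card hD, ← rank_baseChange L, ← finrank_baseChange (R := L) (M' := 𝔤)]
  refine finrank_le_of_lie_snd_eq_lie_fst (x := x) (y := y) _ ?_ ?_
  · let W : Submodule L (L ⊗[K] 𝔤) :=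
      LinearMap.range (ad L (L ⊗[K] 𝔤) x) ⊔ engelCentralizer L x
    refine (Submodule.span_le (p := W.comap (LinearMap.fst L (L ⊗[K] 𝔤) (L ⊗[K] 𝔤)))).2 ?_
    rintro _ ⟨i, rfl⟩
    obtain ⟨a, p, hap, hp⟩ := (hc.baseChange L).exists_connection_apply_eq_lie_add
      (ConnectionAlong.baseChange_lie (D i)) x
    change ConnectionAlong.baseChange 𝔤 (D i) x ∈ W
    rw [hap]
    exact Submodule.add_mem_sup ⟨a, rfl⟩ hp
  · let F : (L ⊗[K] 𝔤) × (L ⊗[K] 𝔤) →ₗ[L] L ⊗[K] 𝔤 :=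
      ad L (L ⊗[K] 𝔤) x ∘ₗ LinearMap.snd L _ _ - ad L (L ⊗[K] 𝔤) y ∘ₗ LinearMap.fst L _ _
    refine fun p hp ↦ sub_eq_zero.1 ((Submodule.span_le (p := LinearMap.ker F)).2 ?_ hp)
    rintro _ ⟨i, rfl⟩
    have h := ConnectionAlong.baseChange_lie (D i) x y
    rw [hxy, map_zero] at h
    change ⁅x, ConnectionAlong.baseChange 𝔤 (D i) y⁆ - ⁅y, ConnectionAlong.baseChange 𝔤 (D i) x⁆ = 0
    rw [← lie_skew y, sub_neg_eq_add, add_comm, ← h]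

end Tangent

/-! ### Derivations and generic points -/

section Derivations

open Algebra

theorem exists_derivation_algebraMap_eq {R S T : Type*} [CommRing R] [CommRing S] [CommRing T]
    [Algebra R S] [Algebra R T] [Algebra S T] [IsScalarTower R S T] [FormallyEtale S T]
    (d : Derivation R S T) : ∃ D : Derivation R T T, ∀ x, D (algebraMap S T x) = d x := by
  let f := d.liftKaehlerDifferential.liftBaseChange T ∘ₗ
    (KaehlerDifferential.tensorKaehlerEquivOfFormallyEtale R S T).symm.toLinearMap
  refine ⟨f.compDer (KaehlerDifferential.D R T), fun x ↦ ?_⟩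
  change d.liftKaehlerDifferential.liftBaseChange T
    ((KaehlerDifferential.tensorKaehlerEquivOfFormallyEtale R S T).symm
      (KaehlerDifferential.D R T (algebraMap S T x))) = _
  rw [KaehlerDifferential.tensorKaehlerEquivOfFormallyEtale_symm_D_algebraMap,
    LinearMap.liftBaseChange_tmul, one_smul, Derivation.liftKaehlerDifferential_comp_D]

theorem formallyEtale_of_isAlgebraic (R L : Type*) [CommRing R] [IsDomain R] [CharZero R] [Field L]
    [Algebra R L] [FaithfulSMul R L] [Algebra.IsAlgebraic R L] : FormallyEtale R L := by
  let := FractionRing.liftAlgebra R L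
  have := FractionRing.isScalarTower_liftAlgebra R L
  have : Algebra.IsAlgebraic (FractionRing R) L :=
    (IsFractionRing.comap_isAlgebraic_iff (A := R)).1 inferInstance
  have : CharZero (FractionRing R) :=
    charZero_of_injective_algebraMap (IsFractionRing.injective R (FractionRing R))
  have : FormallyEtale R (FractionRing R) := .of_isLocalization (nonZeroDivisors R)
  have : FormallyEtale (FractionRing R) L := .of_isSeparable _ _
  exact .comp R (FractionRing R) L

theorem ringKrullDim_le_of_isIntegral (R A : Type*) [CommRing R] [CommRing A] [Algebra R A]
    [Algebra.IsIntegral R A] : ringKrullDim A ≤ ringKrullDim R :=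
  Order.krullDim_le_of_strictMono (PrimeSpectrum.comap (algebraMap R A)) fun _ _ h ↦
    Ideal.IsIntegral.comap_lt_comap (R := R) h

variable {K L : Type*} [Field K] [Field L] [Algebra K L]

theorem exists_derivation_apply_eq_single [CharZero K] (A : Type*) [CommRing A] [IsDomain A]
    [Algebra K A] [FiniteType K A] [Algebra A L] [IsScalarTower K A L] [FaithfulSMul A L]
    [Algebra.IsAlgebraic A L] :
    ∃ (s : ℕ) (x : Fin s → A) (D : Fin s → Derivation K L L), ringKrullDim A ≤ s ∧
      ∀ i j, D i (algebraMap A L (x j)) = if j = i then 1 else 0 := by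
  obtain ⟨s, φ, hφ, hint⟩ := exists_integral_inj_algHom_of_fg K A
  let R := MvPolynomial (Fin s) K
  algebraize [φ.toRingHom, (algebraMap A L).comp φ.toRingHom]
  have : Algebra.IsIntegral R A := ⟨hint⟩
  have : IsScalarTower K R A := .of_algebraMap_eq' φ.comp_algebraMap.symm
  have : IsScalarTower K R L := .of_algebraMap_eq' <| by
    rw [IsScalarTower.algebraMap_eq K A L, IsScalarTower.algebraMap_eq K R A]; rfl
  have : FaithfulSMul R A := (faithfulSMul_iff_algebraMap_injective R A).2 hφ
  have : FaithfulSMul R L := .trans R A L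
  have : Algebra.IsAlgebraic R L := .trans R A L
  have : FormallyEtale R L := formallyEtale_of_isAlgebraic R L
  have hR : ringKrullDim R = s := by
    simp [R, MvPolynomial.ringKrullDim_of_isNoetherianRing]
  choose D hD using fun i ↦ exists_derivation_algebraMap_eq (T := L)
    (MvPolynomial.mkDerivation K (Pi.single i 1) : Derivation K R L)
  refine ⟨s, fun j ↦ φ (MvPolynomial.X j), D, hR ▸ ringKrullDim_le_of_isIntegral R A,
    fun i j ↦ (hD i _).trans <| by rw [MvPolynomial.mkDerivation_X, Pi.single_apply]⟩

theorem derivation_sum_smul_apply {ι : Type*} [Fintype ι] (c : ι → L) (D : ι → Derivation K L L)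
    (x : L) : (∑ i, c i • D i) x = ∑ i, c i * D i x := by
  rw [← Derivation.coeFnAddMonoidHom_apply, map_sum, Finset.sum_apply]; rfl

theorem linearIndependent_derivation_of_mem_adjoin {ι κ : Type*} [Finite κ] [DecidableEq κ]
    {ξ : ι → L} {x : κ → L} (hx : ∀ j, x j ∈ adjoin K (Set.range ξ)) {D : κ → Derivation K L L}
    (hD : ∀ i j, D i (x j) = if j = i then 1 else 0) : LinearIndependent L fun i j ↦ D i (ξ j) := by
  have := Fintype.ofFinite κ
  rw [Fintype.linearIndependent_iff]
  intro c hc j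
  have hξ : Set.EqOn (∑ i, c i • D i : Derivation K L L) (0 : Derivation K L L) (Set.range ξ) := by
    rintro _ ⟨m, rfl⟩
    rw [derivation_sum_smul_apply]
    simpa using congrFun hc m
  simpa [derivation_sum_smul_apply, hD, Pi.single_apply] using Derivation.eqOn_adjoin hξ (hx j)

-- The coordinates `ξ` are those of a generic point of the zero locus of `P`.
theorem exists_genericPoint.{u, v} {K : Type u} [Field K] [CharZero K] {ι : Type v} [Finite ι]
    (P : Ideal (MvPolynomial ι K)) [P.IsPrime] :
    ∃ (L : Type (max u v)) (_ : Field L) (_ : Algebra K L) (_ : IsAlgClosed L) (ξ : ι → L)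
      (s : ℕ) (D : Fin s → Derivation K L L), (∀ F, MvPolynomial.aeval ξ F = 0 ↔ F ∈ P) ∧
      LinearIndependent L (fun i j ↦ D i (ξ j)) ∧ ringKrullDim (MvPolynomial ι K ⧸ P) ≤ s := by
  let A := MvPolynomial ι K ⧸ P
  let L := AlgebraicClosure (FractionRing A)
  have : Algebra.IsAlgebraic A (FractionRing A) := IsLocalization.isAlgebraic _ (nonZeroDivisors A)
  have : Algebra.IsAlgebraic A L := .trans A (FractionRing A) L
  have : FaithfulSMul A L := (faithfulSMul_iff_algebraMap_injective A L).2 <| by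
    rw [IsScalarTower.algebraMap_eq A (FractionRing A) L]
    exact (algebraMap (FractionRing A) L).injective.comp (IsFractionRing.injective A _)
  let φ : MvPolynomial ι K →ₐ[K] L := (IsScalarTower.toAlgHom K A L).comp (Ideal.Quotient.mkₐ K P)
  let ξ : ι → L := fun j ↦ φ (MvPolynomial.X j)
  have hφ : MvPolynomial.aeval ξ = φ := (MvPolynomial.aeval_unique φ).symm
  obtain ⟨s, x, D, hdim, hD⟩ := exists_derivation_apply_eq_single (K := K) (L := L) A
  refine ⟨L, inferInstance, inferInstance, inferInstance, ξ, s, D, fun F ↦ ?_,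
    linearIndependent_derivation_of_mem_adjoin (fun j ↦ ?_) hD, hdim⟩
  · rw [hφ]
    exact (FaithfulSMul.algebraMap_eq_zero_iff A L).trans Ideal.Quotient.eq_zero_iff_mem
  · obtain ⟨F, hF⟩ := Ideal.Quotient.mk_surjective (x j)
    rw [adjoin_range_eq_range_aeval, hφ, ← hF]
    exact ⟨F, rfl⟩

end Derivations

/-! ### Krull dimension in the Zariski topology -/

universe u v

section Zariski

open Module TopologicalSpace Topology MvPolynomial

variable (K : Type u) [Field K] (V : Type v) [AddCommGroup V] [Module K V] [FiniteDimensional K V]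

/-- The ring of polynomials in the coordinates on `V` that define its Zariski topology. -/
abbrev CoordRing : Type max u v := MvPolynomial (Free.ChooseBasisIndex K V) K

theorem isTopologicalBasis_zar :
    @IsTopologicalBasis V (CV.zar K V)
      {U | ∃ F : CoordRing K V, U = {z | CV.evalP K V F z ≠ 0}} := by
  let := CV.zar K V
  have hinter := isTopologicalBasis_of_subbasis_of_inter (α := V)
    (r := {U | ∃ F : CoordRing K V, U = {z | CV.evalP K V F z ≠ 0}}) rfl <| by
      rintro _ ⟨F, rfl⟩ _ ⟨G, rfl⟩
      exact ⟨F * G, by ext z; simp [CV.evalP]⟩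
  rwa [Set.insert_eq_of_mem (by exact ⟨1, by ext z; simp [CV.evalP]⟩)] at hinter

theorem isClosed_setOf_evalP_eq_zero (F : CoordRing K V) :
    IsClosed[CV.zar K V] {z | CV.evalP K V F z = 0} :=
  (@isOpen_compl_iff V _ (CV.zar K V)).1 <|
    @IsTopologicalBasis.isOpen V (CV.zar K V) _ _ (isTopologicalBasis_zar K V) ⟨F, rfl⟩

variable {K V}

variable (K) in
/-- The ideal of the polynomials that vanish on a subset of `V`. -/
def vanishingIdeal (Z : Set V) : Ideal (CoordRing K V) :=
  MvPolynomial.vanishingIdeal K (CV.coordFn K V '' Z)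

theorem mem_vanishingIdeal {Z : Set V} {F : CoordRing K V} :
    F ∈ vanishingIdeal K Z ↔ ∀ z ∈ Z, CV.evalP K V F z = 0 := Set.forall_mem_image

theorem vanishingIdeal_anti {Z Z' : Set V} (h : Z' ⊆ Z) :
    vanishingIdeal K Z ≤ vanishingIdeal K Z' :=
  vanishingIdeal_anti_mono (Set.image_mono h)

theorem exists_mem_vanishingIdeal_evalP_ne_zero {Z : Set V} (hZ : IsClosed[CV.zar K V] Z) {z : V}
    (hz : z ∉ Z) : ∃ F : CoordRing K V, F ∈ vanishingIdeal K Z ∧ CV.evalP K V F z ≠ 0 := by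
  let := CV.zar K V
  obtain ⟨_, ⟨F, rfl⟩, hFz, hFZ⟩ :=
    (isTopologicalBasis_zar K V).exists_subset_of_mem_open (a := z) (u := Zᶜ) hz hZ.isOpen_compl
  exact ⟨F, mem_vanishingIdeal.2 fun w hw ↦ by_contra fun hFw ↦ hFZ hFw hw, hFz⟩

theorem isPrime_vanishingIdeal {Z : Set V} (hZ : @IsIrreducible V (CV.zar K V) Z) :
    (vanishingIdeal K Z).IsPrime := by
  let := CV.zar K V
  obtain ⟨z, hz⟩ := hZ.nonempty
  refine ⟨(Ideal.ne_top_iff_one _).2 fun h ↦ ?_, fun {F G} hFG ↦ ?_⟩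
  · simpa [CV.evalP] using mem_vanishingIdeal.1 h z hz
  · simp only [mem_vanishingIdeal, CV.evalP, map_mul, mul_eq_zero] at hFG ⊢
    exact isPreirreducible_iff_isClosed_union_isClosed.1 hZ.isPreirreducible _ _
      (isClosed_setOf_evalP_eq_zero K V F) (isClosed_setOf_evalP_eq_zero K V G) hFG

theorem vanishingIdeal_image_val_lt {S : Set V} {Z Z' : Set S} (h : Z' ⊂ Z)
    (hZ' : IsClosed[(CV.zar K V).induced Subtype.val] Z') :
    vanishingIdeal K (Subtype.val '' Z) <
      vanishingIdeal K (Subtype.val '' Z') := by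
  refine ⟨vanishingIdeal_anti (Set.image_mono h.1), fun hle ↦ ?_⟩
  obtain ⟨z, hzZ, hzZ'⟩ := Set.exists_of_ssubset h
  obtain ⟨C, hC, rfl⟩ := (@isClosed_induced_iff _ _ (CV.zar K V) _ _).1 hZ'
  obtain ⟨F, hF, hFz⟩ := exists_mem_vanishingIdeal_evalP_ne_zero hC hzZ'
  refine hFz (mem_vanishingIdeal.1 (hle (mem_vanishingIdeal.2 ?_)) z ⟨z, hzZ, rfl⟩)
  rintro _ ⟨w, hw, rfl⟩
  exact mem_vanishingIdeal.1 hF w hw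

theorem dimSet_le_of_forall_ringKrullDim_le {S : Set V} {d : WithBot ℕ∞}
    (h : ∀ Z ⊆ S, @IsIrreducible V (CV.zar K V) Z →
      ringKrullDim (CoordRing K V ⧸ vanishingIdeal K Z) ≤ d) : CV.dimSet K V S ≤ d := by
  let := CV.zar K V
  have hirr (Z : IrreducibleCloseds S) : IsIrreducible (Subtype.val '' (Z : Set S)) :=
    Z.isIrreducible.image _ continuous_subtype_val.continuousOn
  have hlt {Z Z' : IrreducibleCloseds S} (hZ : Z' < Z) :
      vanishingIdeal K (Subtype.val '' (Z : Set S)) <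
        vanishingIdeal K (Subtype.val '' (Z' : Set S)) :=
    vanishingIdeal_image_val_lt hZ Z'.isClosed
  change Order.krullDim (IrreducibleCloseds S) ≤ d
  rw [Order.krullDim_eq_iSup_height]
  refine iSup_le fun Z ↦ ?_
  let I : Set.Iic Z → (PrimeSpectrum.zeroLocus
      (vanishingIdeal K (Subtype.val '' (Z : Set S)) : Set (CoordRing K V)))ᵒᵈ := fun Z' ↦
    .toDual ⟨⟨_, isPrime_vanishingIdeal (hirr Z')⟩,
      vanishingIdeal_anti (Set.image_mono Z'.2)⟩
  calc (Order.height Z : WithBot ℕ∞)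
      = Order.krullDim (Set.Iic Z) := Order.height_eq_krullDim_Iic Z
    _ ≤ _ := Order.krullDim_le_of_strictMono I fun Z₁ Z₂ hZ ↦ hlt hZ
    _ = ringKrullDim (CoordRing K V ⧸ vanishingIdeal K (Subtype.val '' (Z : Set S))) := by
      rw [Order.krullDim_orderDual, ringKrullDim_quotient]
    _ ≤ d := h _ (Subtype.coe_image_subset S Z) (hirr Z)

theorem dimSet_le_of_forall_linearIndependent_derivation [CharZero K] {S : Set V} {N : ℕ}
    (h : ∀ (L : Type (max u v)) [Field L] [Algebra K L] [IsAlgClosed L]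
      (ξ : Free.ChooseBasisIndex K V → L), (∀ F ∈ vanishingIdeal K S, aeval ξ F = 0) →
      ∀ (s : ℕ) (D : Fin s → Derivation K L L), LinearIndependent L (fun i j ↦ D i (ξ j)) → s ≤ N) :
    CV.dimSet K V S ≤ N := by
  refine dimSet_le_of_forall_ringKrullDim_le fun Z hZS hZ ↦ ?_
  have := isPrime_vanishingIdeal hZ
  obtain ⟨L, _, _, _, ξ, s, D, hξ, hD, hdim⟩ :=
    exists_genericPoint (vanishingIdeal K Z)
  exact hdim.trans <| mod_cast h L ξ
    (fun F hF ↦ (hξ F).2 (vanishingIdeal_anti hZS hF)) s D hD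

end Zariski

section UpperBound

open Module TensorProduct LieAlgebra

theorem sum_mul_tmul_apply_eq_zero {K L V W : Type*} [Field K] [Field L] [Algebra K L]
    [AddCommGroup V] [Module K V] [FiniteDimensional K V] [AddCommGroup W] [Module K W] {S : Set V}
    {ξ : Free.ChooseBasisIndex K V → L}
    (hξ : ∀ F ∈ vanishingIdeal K S, MvPolynomial.aeval ξ F = 0) (β : V →ₗ[K] V →ₗ[K] W)
    (hβ : ∀ z ∈ S, β z z = 0) :
    ∑ i, ∑ j, (ξ i * ξ j) ⊗ₜ[K] β (Free.chooseBasis K V i) (Free.chooseBasis K V j) = 0 := by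
  set b := Free.chooseBasis K V
  let c := Free.chooseBasis K W
  refine (Algebra.TensorProduct.basis L c).repr.injective (Finsupp.ext fun m ↦ ?_)
  let F : CoordRing K V :=
    ∑ i, ∑ j, MvPolynomial.C (c.repr (β (b i) (b j)) m) * (MvPolynomial.X i * MvPolynomial.X j)
  have hF : F ∈ vanishingIdeal K S := mem_vanishingIdeal.2 fun z hz ↦ by
    have hm : c.repr (β z z) m = 0 := by rw [hβ z hz]; simp
    have hz : β z z = ∑ i, ∑ j, (b.repr z i * b.repr z j) • β (b i) (b j) := by
      conv_lhs => rw [← b.sum_repr z]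
      simp only [map_sum, map_smul, LinearMap.sum_apply, LinearMap.smul_apply, Finset.smul_sum,
        smul_smul]
      rw [Finset.sum_comm]
      simp only [mul_comm]
    simpa [hz, F, CV.evalP, CV.coordFn, b, mul_comm] using hm
  simpa [F, Algebra.smul_def, mul_comm] using hξ F hF

variable {K L 𝔤 : Type*} [Field K] [Field L] [Algebra K L] [LieRing 𝔤] [LieAlgebra K 𝔤]
  [FiniteDimensional K 𝔤]

variable (K L 𝔤) in
/-- The element of `(L ⊗ 𝔤)²` with given coordinates in the basis of `𝔤 × 𝔤` that defines the
Zariski topology. -/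
def pairOfCoords : (Free.ChooseBasisIndex K (𝔤 × 𝔤) → L) ≃ₗ[L] (L ⊗[K] 𝔤) × (L ⊗[K] 𝔤) :=
  (Algebra.TensorProduct.basis L (Free.chooseBasis K (𝔤 × 𝔤))).equivFun.symm ≪≫ₗ
    TensorProduct.prodRight K L L 𝔤 𝔤

theorem pairOfCoords_apply (ξ : Free.ChooseBasisIndex K (𝔤 × 𝔤) → L) :
    pairOfCoords K L 𝔤 ξ = (∑ j, ξ j ⊗ₜ (Free.chooseBasis K (𝔤 × 𝔤) j).1,
      ∑ j, ξ j ⊗ₜ (Free.chooseBasis K (𝔤 × 𝔤) j).2) := by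
  simp [pairOfCoords, Basis.equivFun_symm_apply, Prod.ext_iff, smul_tmul', Prod.fst_sum,
    Prod.snd_sum]

theorem pairOfCoords_derivation (D : Derivation K L L)
    (ξ : Free.ChooseBasisIndex K (𝔤 × 𝔤) → L) :
    pairOfCoords K L 𝔤 (fun j ↦ D (ξ j)) =
      (ConnectionAlong.baseChange 𝔤 D (pairOfCoords K L 𝔤 ξ).1,
        ConnectionAlong.baseChange 𝔤 D (pairOfCoords K L 𝔤 ξ).2) := by
  simp only [pairOfCoords_apply, map_sum, ConnectionAlong.baseChange_tmul]

theorem lie_pairOfCoords_eq_zero {ξ : Free.ChooseBasisIndex K (𝔤 × 𝔤) → L}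
    (hξ : ∀ F ∈ vanishingIdeal K (commSet K 𝔤), MvPolynomial.aeval ξ F = 0) :
    ⁅(pairOfCoords K L 𝔤 ξ).1, (pairOfCoords K L 𝔤 ξ).2⁆ = 0 := by
  let β : 𝔤 × 𝔤 →ₗ[K] 𝔤 × 𝔤 →ₗ[K] 𝔤 :=
    (ad K 𝔤 : 𝔤 →ₗ[K] Module.End K 𝔤).compl₁₂ (LinearMap.fst K 𝔤 𝔤) (LinearMap.snd K 𝔤 𝔤)
  have hβ := sum_mul_tmul_apply_eq_zero hξ β fun _ hz ↦ hz
  simp only [pairOfCoords_apply, _root_.sum_lie, _root_.lie_sum, ExtendScalars.bracket_tmul]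
  rw [Finset.sum_comm]
  exact hβ

theorem dimSet_commSet_le [CharZero K] (hred : radical K 𝔤 = center K 𝔤) :
    CV.dimSet K (𝔤 × 𝔤) (commSet K 𝔤) ≤ (finrank K 𝔤 + rank K 𝔤 : ℕ) := by
  refine dimSet_le_of_forall_linearIndependent_derivation fun L _ _ _ ξ hξ s D hD ↦ ?_
  have hpair : LinearIndependent L fun i ↦ pairOfCoords K L 𝔤 fun j ↦ D i (ξ j) :=
    hD.map' (pairOfCoords K L 𝔤).toLinearMap (LinearEquiv.ker _)
  simp only [pairOfCoords_derivation] at hpair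
  simpa using le_finrank_add_rank_of_linearIndependent_connection hred
    (lie_pairOfCoords_eq_zero hξ) hpair

end UpperBound

/-! ### Polynomial maps -/

section Polynomial

open Module TopologicalSpace Topology

variable (K : Type*) [Field K] {V W : Type*} [AddCommGroup V] [Module K V] [FiniteDimensional K V]
  [AddCommGroup W] [Module K W]

variable (V) in
/-- The evaluation of polynomials in the coordinates on `V` as functions on `V`. -/
def evalHom : CoordRing K V →ₐ[K] V → K :=
  AlgHom.pi fun z ↦ MvPolynomial.aeval (CV.coordFn K V z)

variable (V) in
/-- The algebra of polynomial functions on `V`. -/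
def polyFun : Subalgebra K (V → K) := (evalHom K V).range

/-- Polynomial maps between finite-dimensional vector spaces, tested on linear functionals. -/
def IsPolyMap (φ : V → W) : Prop := ∀ l : Dual K W, (fun z ↦ l (φ z)) ∈ polyFun K V

variable {K}

theorem evalP_mem_polyFun (F : CoordRing K V) : CV.evalP K V F ∈ polyFun K V := ⟨F, rfl⟩

theorem isOpen_setOf_ne_zero {f : V → K} (hf : f ∈ polyFun K V) :
    IsOpen[CV.zar K V] {z | f z ≠ 0} := by
  obtain ⟨F, rfl⟩ := hf
  exact @IsTopologicalBasis.isOpen V (CV.zar K V) _ _ (isTopologicalBasis_zar K V) ⟨F, rfl⟩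

theorem dual_mem_polyFun (l : Dual K V) : ⇑l ∈ polyFun K V := by
  refine ⟨∑ i, MvPolynomial.C (l (Free.chooseBasis K V i)) * MvPolynomial.X i, funext fun z ↦ ?_⟩
  have hz : l z = ∑ i, (Free.chooseBasis K V).repr z i * l (Free.chooseBasis K V i) := by
    conv_lhs => rw [← (Free.chooseBasis K V).sum_repr z]
    simp only [map_sum, map_smul, smul_eq_mul]
  simp [hz, evalHom, CV.coordFn, mul_comm]

theorem isPolyMap_linearMap (A : V →ₗ[K] W) : IsPolyMap K A := fun l ↦ dual_mem_polyFun (l ∘ₗ A)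

theorem isPolyMap_const (w : W) : IsPolyMap K fun _ : V ↦ w := fun l ↦
  (polyFun K V).algebraMap_mem (l w)

namespace IsPolyMap

variable {φ ψ : V → W}

theorem add (hφ : IsPolyMap K φ) (hψ : IsPolyMap K ψ) : IsPolyMap K fun z ↦ φ z + ψ z := fun l ↦ by
  simp only [map_add]
  exact (polyFun K V).add_mem (hφ l) (hψ l)

theorem smul {f : V → K} (hf : f ∈ polyFun K V) (hφ : IsPolyMap K φ) :
    IsPolyMap K fun z ↦ f z • φ z := fun l ↦ by
  simp only [map_smul]
  exact (polyFun K V).mul_mem hf (hφ l)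

theorem sum {ι : Type*} (s : Finset ι) {φ : ι → V → W} (hφ : ∀ i, IsPolyMap K (φ i)) :
    IsPolyMap K fun z ↦ ∑ i ∈ s, φ i z := fun l ↦ by
  have h := (polyFun K V).sum_mem (t := s) fun i _ ↦ hφ i l
  convert h using 1
  ext z
  simp

variable [FiniteDimensional K W]

theorem comp_mem_polyFun (hφ : IsPolyMap K φ) {f : W → K} (hf : f ∈ polyFun K W) :
    (fun z ↦ f (φ z)) ∈ polyFun K V := by
  obtain ⟨F, rfl⟩ := hf
  induction F using MvPolynomial.induction_on with
  | C a => exact (MvPolynomial.algHom_C (evalHom K W) a) ▸ (polyFun K V).algebraMap_mem a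
  | add p q hp hq =>
    rw [map_add]
    exact (polyFun K V).add_mem hp hq
  | mul_X p i hp =>
    rw [map_mul]
    have hX := hφ ((Free.chooseBasis K W).coord i)
    convert (polyFun K V).mul_mem hp hX using 1
    ext z
    simp [evalHom, CV.coordFn]

variable {U : Type*} [AddCommGroup U] [Module K U]

theorem comp {χ : W → U} (hχ : IsPolyMap K χ) (hφ : IsPolyMap K φ) :
    IsPolyMap K fun z ↦ χ (φ z) := fun l ↦ hφ.comp_mem_polyFun (hχ l)

variable [FiniteDimensional K U]

theorem prodMk {χ : V → U} (hφ : IsPolyMap K φ) (hχ : IsPolyMap K χ) :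
    IsPolyMap K fun z ↦ (φ z, χ z) := by
  simpa using ((isPolyMap_linearMap (.inl K W U)).comp hφ).add
    ((isPolyMap_linearMap (.inr K W U)).comp hχ)

theorem bilin {Y : Type*} [AddCommGroup Y] [Module K Y] {χ : V → U}
    (β : W →ₗ[K] U →ₗ[K] Y) (hφ : IsPolyMap K φ) (hχ : IsPolyMap K χ) :
    IsPolyMap K fun z ↦ β (φ z) (χ z) := by
  let b := Free.chooseBasis K W
  have hsum (z : V) : β (φ z) (χ z) = ∑ i, b.coord i (φ z) • β (b i) (χ z) := by
    conv_lhs => rw [← b.sum_repr (φ z)]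
    simp only [map_sum, map_smul, LinearMap.sum_apply, LinearMap.smul_apply, Basis.coord_apply]
  simp only [hsum]
  exact sum _ fun i ↦ ((isPolyMap_linearMap (β (b i))).comp hχ).smul (hφ (b.coord i))

theorem continuous (hφ : IsPolyMap K φ) : Continuous[CV.zar K V, CV.zar K W] φ := by
  let := CV.zar K V
  refine continuous_generateFrom_iff.2 ?_
  rintro _ ⟨F, rfl⟩
  exact isOpen_setOf_ne_zero (hφ.comp_mem_polyFun (evalP_mem_polyFun F))

end IsPolyMap

section Irreducible

variable [Infinite K]

variable (K V) in
theorem evalHom_injective : Function.Injective (evalHom K V) := by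
  intro F G h
  refine MvPolynomial.funext fun x ↦ ?_
  obtain ⟨z, rfl⟩ : ∃ z, CV.coordFn K V z = x := (Free.chooseBasis K V).equivFun.surjective x
  simp only [← MvPolynomial.coe_aeval_eq_eval]
  exact congrFun h z

theorem eq_zero_or_eq_zero_of_mul_eq_zero {f h : V → K} (hf : f ∈ polyFun K V)
    (hh : h ∈ polyFun K V) (hfh : f * h = 0) : f = 0 ∨ h = 0 := by
  obtain ⟨F, rfl⟩ := hf
  obtain ⟨H, rfl⟩ := hh
  have hFH : F * H = 0 := evalHom_injective K V (by simpa using hfh)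
  exact (mul_eq_zero.1 hFH).imp (by rintro rfl; exact map_zero _) (by rintro rfl; exact map_zero _)

variable (K V) in
theorem isIrreducible_univ_zar : @IsIrreducible V (CV.zar K V) Set.univ := by
  let := CV.zar K V
  refine ⟨⟨0, trivial⟩, ?_⟩
  rintro U U' hU hU' ⟨x, -, hx⟩ ⟨x', -, hx'⟩
  have hbasis := isTopologicalBasis_zar K V
  obtain ⟨_, ⟨F, rfl⟩, hFx, hFU⟩ := hbasis.exists_subset_of_mem_open hx hU
  obtain ⟨_, ⟨F', rfl⟩, hFx', hFU'⟩ := hbasis.exists_subset_of_mem_open hx' hU'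
  by_contra hempty
  have hmul : CV.evalP K V F * CV.evalP K V F' = 0 := funext fun z ↦ by_contra fun hz ↦
    hempty ⟨z, trivial, hFU (left_ne_zero_of_mul hz), hFU' (right_ne_zero_of_mul hz)⟩
  rcases eq_zero_or_eq_zero_of_mul_eq_zero (evalP_mem_polyFun F) (evalP_mem_polyFun F') hmul with
    h | h
  · exact hFx (congrFun h x)
  · exact hFx' (congrFun h x')

theorem dense_setOf_ne_zero {f : V → K} (hf : f ∈ polyFun K V) (hne : ∃ z, f z ≠ 0) :
    @Dense V (CV.zar K V) {z | f z ≠ 0} := by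
  let := CV.zar K V
  have : PreirreducibleSpace V := ⟨(isIrreducible_univ_zar K V).isPreirreducible⟩
  exact (isOpen_setOf_ne_zero hf).dense hne

theorem le_dimSet_of_forall_exists_polyFun {E : Type*} [AddCommGroup E] [Module K E]
    [FiniteDimensional K E] {S : Set V} {φ : E → V} (hφ : IsPolyMap K φ) (hS : ∀ e, φ e ∈ S)
    {n : ℕ} (b : Basis (Fin n) K E)
    (h : ∀ i, ∃ f ∈ polyFun K V, (∀ e ∈ b.flag i.castSucc, f (φ e) = 0) ∧ f (φ (b i)) ≠ 0) :
    n ≤ CV.dimSet K V S := by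
  let := CV.zar K V
  let φS : E → S := fun e ↦ ⟨φ e, hS e⟩
  let Z (i : Fin (n + 1)) : IrreducibleCloseds S :=
    { carrier := closure (φS '' b.flag i)
      isIrreducible' := by
        let := CV.zar K (b.flag i)
        let := CV.zar K E
        have hcont : Continuous fun e : b.flag i ↦ φS e :=
          (hφ.comp (isPolyMap_linearMap (b.flag i).subtype)).continuous.subtype_mk _
        have hrange : φS '' b.flag i = (fun e : b.flag i ↦ φS e) '' Set.univ := by
          ext; simp
        rw [hrange]
        exact ((isIrreducible_univ_zar K (b.flag i)).image _ hcont.continuousOn).closure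
      isClosed' := isClosed_closure }
  have hZ : StrictMono Z := Fin.strictMono_iff_lt_succ.2 fun i ↦ by
    obtain ⟨f, hf, hzero, hne⟩ := h i
    refine lt_of_le_not_ge (closure_mono (Set.image_mono (b.flag_mono (Fin.castSucc_le_succ i)))) ?_
    intro hle
    have hclosed : IsClosed {z : S | f z = 0} := by
      obtain ⟨F, rfl⟩ := hf
      exact (isClosed_setOf_evalP_eq_zero K V F).preimage continuous_subtype_val
    have hmem : φS (b i) ∈ closure (φS '' b.flag i.castSucc) :=
      hle (subset_closure ⟨b i, b.self_mem_flag Fin.castSucc_lt_succ, rfl⟩)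
    refine hne (closure_minimal ?_ hclosed hmem)
    rintro _ ⟨e, he, rfl⟩
    exact hzero e he
  exact Order.LTSeries.length_le_krullDim (LTSeries.mk n Z hZ)

theorem finrank_add_finrank_le_dimSet {U : Type*} [AddCommGroup U] [Module K U]
    [FiniteDimensional K U] [FiniteDimensional K W] {S : Set V} {φ : W × U → V}
    (hφ : IsPolyMap K φ) (hS : ∀ e, φ e ∈ S) {ρ : V → W} {σ : V → U} (hρ : IsPolyMap K ρ)
    (hσ : IsPolyMap K σ) {a : K} (ha : a ≠ 0) (hρφ : ∀ w, ρ (φ (w, 0)) = a • w)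
    (hσφ : ∀ w u, σ (φ (w, u)) = u) :
    (finrank K W + finrank K U : ℕ) ≤ CV.dimSet K V S := by
  let c := finBasis K W
  let d := finBasis K U
  let b := (c.prod d).reindex finSumFinEquiv
  refine le_dimSet_of_forall_exists_polyFun hφ hS b fun i ↦ ?_
  have hflag {e} (he : e ∈ b.flag i.castSucc) {j} (hij : i ≤ finSumFinEquiv j) :
      (c.prod d).repr e j = 0 := by
    simpa [b] using b.flag_le_ker_coord (Fin.castSucc_le_castSucc_iff.2 hij) he
  obtain ⟨j | j, rfl⟩ := finSumFinEquiv.surjective i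
  · refine ⟨_, hρ (c.coord j), fun ⟨w, u⟩ he ↦ ?_, by simp [b, hρφ, ha]⟩
    have hu : u = 0 := d.ext_elem fun m ↦ by
      have hjm : finSumFinEquiv (.inl j) ≤ finSumFinEquiv (.inr m) := by
        simp only [finSumFinEquiv_apply_left, finSumFinEquiv_apply_right, Fin.le_def,
          Fin.val_castAdd, Fin.val_natAdd]
        lia
      simpa using hflag he hjm
    have hw : c.repr w j = 0 := hflag he le_rfl
    simp [hu, hρφ, hw]
  · refine ⟨_, hσ (d.coord j), fun ⟨w, u⟩ he ↦ ?_, by simp [b, hσφ]⟩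
    have hu : d.repr u j = 0 := hflag he le_rfl
    simp [hσφ, hu]

end Irreducible

end Polynomial

/-! ### Regular elements and the lower bound -/

section RegularElements

open Module LieAlgebra LieSubalgebra Topology

variable {K 𝔤 : Type*} [Field K] [LieRing 𝔤] [LieAlgebra K 𝔤] [FiniteDimensional K 𝔤]

theorem coeff_charpoly_ad_mem_polyFun (i : ℕ) :
    (fun y ↦ (ad K 𝔤 y).charpoly.coeff i) ∈ polyFun K 𝔤 := by
  refine ⟨((ad K 𝔤 : 𝔤 →ₗ[K] Module.End K 𝔤).polyCharpoly (Free.chooseBasis K 𝔤)).coeff i,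
    funext fun y ↦ ?_⟩
  refine Eq.trans ?_ (LinearMap.polyCharpoly_coeff_eval (ad K 𝔤 : 𝔤 →ₗ[K] Module.End K 𝔤)
    (Free.chooseBasis K 𝔤) y i)
  rw [← MvPolynomial.coe_aeval_eq_eval]
  rfl

variable (K 𝔤) in
theorem isOpen_setOf_isRegular : IsOpen[CV.zar K 𝔤] {y : 𝔤 | IsRegular K y} :=
  isOpen_setOf_ne_zero (coeff_charpoly_ad_mem_polyFun (rank K 𝔤))

variable (K 𝔤) in
theorem dense_setOf_isRegular [Infinite K] : @Dense 𝔤 (CV.zar K 𝔤) {y : 𝔤 | IsRegular K y} :=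
  dense_setOf_ne_zero (coeff_charpoly_ad_mem_polyFun (rank K 𝔤)) (exists_isRegular K 𝔤)

theorem mem_engel_iff_lie_eq_zero_of_isRegular [CharZero K] (hred : radical K 𝔤 = center K 𝔤)
    {y : 𝔤} (hy : IsRegular K y) {z : 𝔤} : z ∈ engel K y ↔ ⁅y, z⁆ = 0 :=
  (exists_completesKillingForm hred).choose_spec.mem_engel_iff_lie_eq_zero hy

theorem fiber_commSet_eq_singleton_prod_engel [CharZero K] (hred : radical K 𝔤 = center K 𝔤)
    {y : 𝔤} (hy : IsRegular K y) :
    {p ∈ commSet K 𝔤 | p.1 = y} = {y} ×ˢ (engel K y : Set 𝔤) := by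
  ext ⟨x, z⟩
  have hz := mem_engel_iff_lie_eq_zero_of_isRegular hred hy (z := z)
  simp only [Set.mem_ofPred_eq, Set.mem_prod, Set.mem_singleton_iff, SetLike.mem_coe, commSet, hz]
  constructor
  · rintro ⟨h, rfl⟩
    exact ⟨rfl, h⟩
  · rintro ⟨rfl, h⟩
    exact ⟨h, rfl⟩

end RegularElements

section CentralizerProj

open Module LieAlgebra LieSubalgebra

variable {K 𝔤 : Type*} [Field K] [LieRing 𝔤] [LieAlgebra K 𝔤] [FiniteDimensional K 𝔤]

variable (K) in
/-- The value at `w` of the polynomial `χ / T ^ rank` in `ad y`, where `χ` is the characteristic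
polynomial of `ad y`. It depends polynomially on `(y, w)`, and for `y` regular it is a scaled
projection of `𝔤` onto the centralizer of `y`. -/
def centralizerProj (y w : 𝔤) : 𝔤 :=
  ∑ i ∈ Finset.range (finrank K 𝔤 + 1),
    (ad K 𝔤 y).charpoly.coeff (i + rank K 𝔤) • (ad K 𝔤 y ^ i) w

section IsPolyMap

variable {V : Type*} [AddCommGroup V] [Module K V] [FiniteDimensional K V] {φ ψ : V → 𝔤}

theorem isPolyMap_lie (hφ : IsPolyMap K φ) (hψ : IsPolyMap K ψ) :
    IsPolyMap K fun z ↦ ⁅φ z, ψ z⁆ :=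
  .bilin (ad K 𝔤 : 𝔤 →ₗ[K] Module.End K 𝔤) hφ hψ

theorem isPolyMap_centralizerProj (hφ : IsPolyMap K φ) (hψ : IsPolyMap K ψ) :
    IsPolyMap K fun z ↦ centralizerProj K (φ z) (ψ z) := by
  have hpow (i : ℕ) : IsPolyMap K fun z ↦ (ad K 𝔤 (φ z) ^ i) (ψ z) := by
    induction i with
    | zero => exact hψ
    | succ i ih =>
      simp only [pow_succ', Module.End.mul_apply, ad_apply]
      exact isPolyMap_lie hφ ih
  exact .sum _ fun i ↦ (hpow i).smul (hφ.comp_mem_polyFun (coeff_charpoly_ad_mem_polyFun _))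

end IsPolyMap

theorem centralizerProj_mem_engel (y w : 𝔤) : centralizerProj K y w ∈ engel K y := by
  refine (mem_engel_iff K y _).2 ⟨rank K 𝔤, ?_⟩
  have hlow : ∑ i ∈ Finset.Ico 0 (rank K 𝔤), (ad K 𝔤 y).charpoly.coeff i • ad K 𝔤 y ^ i = 0 :=
    Finset.sum_eq_zero fun i hi ↦ by
      rw [Polynomial.coeff_eq_zero_of_lt_natTrailingDegree, zero_smul]
      exact (Finset.mem_Ico.1 hi).2.trans_le (rank_le_natTrailingDegree_charpoly_ad K y)
  have hdeg : (ad K 𝔤 y).charpoly.natDegree < rank K 𝔤 + (finrank K 𝔤 + 1) := by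
    rw [LinearMap.charpoly_natDegree]
    lia
  have hCH := LinearMap.aeval_self_charpoly (ad K 𝔤 y)
  rw [Polynomial.aeval_eq_sum_range' hdeg, Finset.range_eq_Ico,
    ← Finset.sum_Ico_consecutive _ (Nat.zero_le (rank K 𝔤)) (Nat.le_add_right _ _), hlow, zero_add,
    Finset.sum_Ico_eq_sum_range, Nat.add_sub_cancel_left] at hCH
  calc (ad K 𝔤 y ^ rank K 𝔤) (centralizerProj K y w)
      = (∑ i ∈ Finset.range (finrank K 𝔤 + 1), (ad K 𝔤 y).charpoly.coeff (rank K 𝔤 + i) •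
          ad K 𝔤 y ^ (rank K 𝔤 + i)) w := by
        simp only [centralizerProj, map_sum, map_smul, LinearMap.sum_apply, LinearMap.smul_apply,
          pow_add, Module.End.mul_apply, add_comm _ (rank K 𝔤)]
    _ = 0 := by rw [hCH, LinearMap.zero_apply]

theorem centralizerProj_of_lie_eq_zero {y w : 𝔤} (h : ⁅y, w⁆ = 0) :
    centralizerProj K y w = (ad K 𝔤 y).charpoly.coeff (rank K 𝔤) • w := by
  have hpow (i : ℕ) : (ad K 𝔤 y ^ (i + 1)) w = 0 := by
    rw [pow_succ, Module.End.mul_apply, ad_apply, h, map_zero]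
  simp [centralizerProj, Finset.sum_range_succ', hpow]

theorem lie_centralizerProj_eq_zero [CharZero K] (hred : radical K 𝔤 = center K 𝔤) (y w : 𝔤) :
    ⁅y, centralizerProj K y w⁆ = 0 := by
  have hfst : IsPolyMap K (Prod.fst : 𝔤 × 𝔤 → 𝔤) := isPolyMap_linearMap (.fst K 𝔤 𝔤)
  have hsnd : IsPolyMap K (Prod.snd : 𝔤 × 𝔤 → 𝔤) := isPolyMap_linearMap (.snd K 𝔤 𝔤)
  obtain ⟨y₀, hy₀⟩ := exists_isRegular K 𝔤
  refine (forall_dual_apply_eq_zero_iff K _).1 fun l ↦ ?_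
  have hmul : (fun p : 𝔤 × 𝔤 ↦ l ⁅p.1, centralizerProj K p.1 p.2⁆) *
      (fun p ↦ (ad K 𝔤 p.1).charpoly.coeff (rank K 𝔤)) = 0 := by
    ext p
    by_cases hp : IsRegular K p.1
    · simp [(mem_engel_iff_lie_eq_zero_of_isRegular hred hp).1 (centralizerProj_mem_engel p.1 p.2)]
    · exact mul_eq_zero_of_right _ (not_not.1 hp)
  rcases eq_zero_or_eq_zero_of_mul_eq_zero
    (isPolyMap_lie hfst (isPolyMap_centralizerProj hfst hsnd) l)
    (hfst.comp_mem_polyFun (coeff_charpoly_ad_mem_polyFun _)) hmul with h | h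
  · exact congrFun h (y, w)
  · exact absurd (congrFun h (y₀, 0)) hy₀

end CentralizerProj

section LowerBound

open Module LieAlgebra LieSubalgebra

variable {K 𝔤 : Type*} [Field K] [LieRing 𝔤] [LieAlgebra K 𝔤] [FiniteDimensional K 𝔤]

theorem isPolyMap_add_centralizerProj (W : Submodule K 𝔤) (y₀ : 𝔤) :
    IsPolyMap K fun e : W × 𝔤 ↦ (y₀ + e.2, centralizerProj K (y₀ + e.2) (e.1 : 𝔤)) := by
  have hfst : IsPolyMap K fun e : W × 𝔤 ↦ y₀ + e.2 :=
    (isPolyMap_const y₀).add (isPolyMap_linearMap (.snd K W 𝔤))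
  have hsnd : IsPolyMap K fun e : W × 𝔤 ↦ (e.1 : 𝔤) :=
    isPolyMap_linearMap (W.subtype ∘ₗ .fst K W 𝔤)
  exact hfst.prodMk (isPolyMap_centralizerProj hfst hsnd)

theorem le_dimSet_commSet [CharZero K] (hred : radical K 𝔤 = center K 𝔤) :
    (finrank K 𝔤 + rank K 𝔤 : ℕ) ≤ CV.dimSet K (𝔤 × 𝔤) (commSet K 𝔤) := by
  obtain ⟨y₀, hy₀⟩ := exists_isRegular K 𝔤
  let W : Submodule K 𝔤 := (engel K y₀).toSubmodule
  have hrank : finrank K W = rank K 𝔤 := (isRegular_iff_finrank_engel_eq_rank K y₀).1 hy₀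
  have hcent (w : W) :
      centralizerProj K y₀ (w : 𝔤) = (ad K 𝔤 y₀).charpoly.coeff (rank K 𝔤) • (w : 𝔤) :=
    centralizerProj_of_lie_eq_zero ((mem_engel_iff_lie_eq_zero_of_isRegular hred hy₀).1 w.2)
  obtain ⟨ρ, hρ⟩ := W.subtype.exists_leftInverse_of_injective W.ker_subtype
  have hρw (w : W) : ρ w = w := LinearMap.congr_fun hρ w
  rw [add_comm, ← hrank]
  exact finrank_add_finrank_le_dimSet (isPolyMap_add_centralizerProj W y₀)
    (fun e ↦ lie_centralizerProj_eq_zero hred _ _)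
    (ρ := fun p ↦ ρ p.2) (σ := fun p ↦ p.1 + -y₀) (a := (ad K 𝔤 y₀).charpoly.coeff (rank K 𝔤))
    (isPolyMap_linearMap (ρ ∘ₗ .snd K 𝔤 𝔤))
    ((isPolyMap_linearMap (.fst K 𝔤 𝔤)).add (isPolyMap_const (-y₀))) hy₀
    (fun w ↦ by simp [hcent, hρw]) (by simp)

end LowerBound

end CommutingVariety

open CommutingVariety in
theorem dim_commuting_variety_general {K 𝔤 : Type*} [Field K] [CharZero K] [LieRing 𝔤]
    [LieAlgebra K 𝔤] [FiniteDimensional K 𝔤]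
    (hred : LieAlgebra.radical K 𝔤 = LieAlgebra.center K 𝔤)
    (t : LieSubalgebra K 𝔤) [t.IsCartanSubalgebra] :
    CV.dimSet K (𝔤 × 𝔤) (commSet K 𝔤) = (Module.finrank K 𝔤 + Module.finrank K t : ℕ) ∧
      ∃ U : Set 𝔤, @IsOpen 𝔤 (CV.zar K 𝔤) U ∧ @Dense 𝔤 (CV.zar K 𝔤) U ∧
        ∀ y ∈ U, ∃ t' : LieSubalgebra K 𝔤, t'.IsCartanSubalgebra ∧
          Module.finrank K t' = Module.finrank K t ∧
          {p ∈ commSet K 𝔤 | p.1 = y} = {y} ×ˢ (t' : Set 𝔤) := by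
  rw [finrank_eq_rank_of_isCartanSubalgebra t]
  refine ⟨le_antisymm (dimSet_commSet_le hred) (le_dimSet_commSet hred),
    {y | LieAlgebra.IsRegular K y}, isOpen_setOf_isRegular K 𝔤, dense_setOf_isRegular K 𝔤,
    fun y hy ↦ ⟨LieSubalgebra.engel K y, isCartanSubalgebra_engel_of_isRegular hy,
      (LieAlgebra.isRegular_iff_finrank_engel_eq_rank K y).1 hy,
      fiber_commSet_eq_singleton_prod_engel hred hy⟩⟩

/-- The commuting variety `C` has dimension `dim g + rk g`.  Moreover, for
all `y` in a Zariski-dense open subset of `g`, the fiber of the first projection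
`π₁ : C → g` over `y` is `{y} × t'` for a Cartan subalgebra `t'` of `g` (a linear — in
particular affine — subspace of dimension `rk g`). -/
theorem dim_commuting_variety
    (hred : LieAlgebra.radical k g = LieAlgebra.center k g) (hnc : ¬IsLieAbelian g)
    (t : LieSubalgebra k g) (ht : t.IsCartanSubalgebra) :
    CV.dimSet k (g × g) (commSet k g)
        = (((Module.finrank k g + Module.finrank k ↥t : ℕ) : ℕ∞) : WithBot ℕ∞) ∧
      ∃ U : Set g, @IsOpen g (CV.zar k g) U ∧ @Dense g (CV.zar k g) U ∧
        ∀ y ∈ U, ∃ t' : LieSubalgebra k g, t'.IsCartanSubalgebra ∧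
          Module.finrank k ↥t' = Module.finrank k ↥t ∧
          {p ∈ commSet k g | p.1 = y} = {y} ×ˢ (t' : Set g) :=
  dim_commuting_variety_general hred t
end
end

section
/- Let m = sl_{n₁} ⊕ … ⊕ sl_{n_q} be a finite direct sum of special linear Lie algebras over k, and let x ∈ m be a nilpotent element. Then there exists a semisimple element h ∈ m commuting with x such that x is a regular element of the centralizer m_h, i.e. the centralizer of x inside m_h has dimension equal to rk m = (n₁ − 1) + … + (n_q − 1). -/
noncomputable section

/-- Componentwise Lie ring structure on a product of Lie rings. -/
instance Pi.lieRing {ι : Type*} (L : ι → Type*) [∀ i, LieRing (L i)] :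
    LieRing (∀ i, L i) where
  bracket x y := fun i => ⁅x i, y i⁆
  add_lie x y z := funext fun i => add_lie (x i) (y i) (z i)
  lie_add x y z := funext fun i => lie_add (x i) (y i) (z i)
  lie_self x := funext fun i => lie_self (x i)
  leibniz_lie x y z := funext fun i => leibniz_lie (x i) (y i) (z i)

/-- Componentwise Lie algebra structure on a product of Lie algebras. -/
instance Pi.lieAlgebra {k ι : Type*} [CommRing k] (L : ι → Type*) [∀ i, LieRing (L i)]
    [∀ i, LieAlgebra k (L i)] : LieAlgebra k (∀ i, L i) where
  lie_smul c x y := funext fun i => lie_smul c (x i) (y i)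

open LieAlgebra.SpecialLinear Module

/-!
It suffices to treat one summand. As a `k[X]`-module with `X` acting as `x`, the space `kⁿ` is a
product of cyclic modules, so it can be identified with a commutative algebra
`A = ∏ i, k[X] ⧸ I i` on which `x` is multiplication by `X`. Let `h` be multiplication by a tuple of
pairwise distinct scalars, shifted so that its trace is zero. Lagrange interpolation recovers the
idempotents of `A` from `h`, so `X` and this tuple generate `A`. A linear endomorphism of a
commutative algebra commuting with multiplication by generators is itself a multiplication, so the
commutant of `{h, x}` is `A`, of dimension `n`. The identity matrix lies in it and has nonzero
trace, so its traceless part has dimension `n - 1`.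
-/

open Polynomial

section RegularRepresentation

variable {R A : Type*} [CommRing R] [CommRing A] [Algebra R A] {s : Set A}

lemma lmul_apply_one_eq_of_commute (hs : Algebra.adjoin R s = ⊤) {f : End R A}
    (hf : ∀ a ∈ s, Commute f (Algebra.lmul R A a)) : Algebra.lmul R A (f 1) = f := by
  have commute_lmul (a : A) : Commute f (Algebra.lmul R A a) := by
    have lmul_mem_adjoin : Algebra.lmul R A a ∈ Algebra.adjoin R (Algebra.lmul R A '' s) := by
      rw [← AlgHom.map_adjoin, hs]
      exact Subalgebra.mem_map.mpr ⟨a, Algebra.mem_top, rfl⟩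
    exact Algebra.commute_of_mem_adjoin_of_forall_mem_commute lmul_mem_adjoin
      (Set.forall_mem_image.mpr hf)
  ext a
  simpa [mul_comm] using (LinearMap.congr_fun (commute_lmul a) 1).symm

lemma centralizer_leftMulMatrix_image {n : Type*} [Fintype n] [DecidableEq n] (b : Basis n R A)
    (hs : Algebra.adjoin R s = ⊤) :
    Subalgebra.centralizer R (Algebra.leftMulMatrix b '' s) = (Algebra.leftMulMatrix b).range := by
  ext Y
  rw [Subalgebra.mem_centralizer_iff, Set.forall_mem_image, AlgHom.mem_range]
  constructor
  · intro hY
    let f : End R A := (LinearMap.toMatrixAlgEquiv b).symm Y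
    have commute_lmul : ∀ a ∈ s, Commute f (Algebra.lmul R A a) := fun a ha => by
      apply (LinearMap.toMatrixAlgEquiv b).injective
      rw [map_mul, map_mul, AlgEquiv.apply_symm_apply]
      exact (hY ha).symm
    refine ⟨f 1, ?_⟩
    rw [Algebra.leftMulMatrix_apply, lmul_apply_one_eq_of_commute hs commute_lmul]
    exact (LinearMap.toMatrixAlgEquiv b).apply_symm_apply Y
  · rintro ⟨a, rfl⟩ c -
    rw [← map_mul, ← map_mul, mul_comm]

end RegularRepresentation

section ProductAlgebra

variable {k ι : Type*} [Field k] {A : ι → Type*} [∀ i, Ring (A i)] [∀ i, Algebra k (A i)]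
  {c : ι → k}

lemma aeval_algebraMap_lagrange_basis [Fintype ι] [DecidableEq ι] (hc : Function.Injective c)
    (i : ι) :
    aeval (fun j => algebraMap k (A j) (c j)) (Lagrange.basis Finset.univ c i) =
      Pi.single i 1 := by
  ext j
  simp only [aeval_pi_apply, aeval_algebraMap_apply_eq_algebraMap_eval]
  obtain rfl | hij := eq_or_ne i j
  · rw [Lagrange.eval_basis_self hc.injOn (Finset.mem_univ i), map_one, Pi.single_eq_same]
  · rw [Lagrange.eval_basis_of_ne hij (Finset.mem_univ j), map_zero, Pi.single_eq_of_ne' hij]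

lemma adjoin_algebraMap_pair_eq_top [Finite ι] {a : ∀ i, A i}
    (ha : ∀ i, Algebra.adjoin k {a i} = ⊤) (hc : Function.Injective c) :
    Algebra.adjoin k {fun i => algebraMap k (A i) (c i), a} = ⊤ := by
  classical
  cases nonempty_fintype ι
  refine eq_top_iff.mpr fun y _ => ?_
  have exists_aeval_eq (i : ι) : ∃ p : k[X], aeval (a i) p = y i := by
    rw [← AlgHom.mem_range, ← Algebra.adjoin_singleton_eq_range_aeval, ha i]
    exact Algebra.mem_top
  choose p hp using exists_aeval_eq
  have y_eq_sum : y = ∑ i,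
      aeval (fun j => algebraMap k (A j) (c j)) (Lagrange.basis Finset.univ c i) *
        aeval a (p i) := by
    ext j
    simp only [aeval_algebraMap_lagrange_basis hc, Finset.sum_apply, Pi.mul_apply, aeval_pi_apply]
    rw [Fintype.sum_eq_single j fun i hi => by rw [Pi.single_eq_of_ne' hi, zero_mul],
      Pi.single_eq_same, one_mul, hp]
  rw [y_eq_sum]
  exact sum_mem fun i _ => mul_mem
    (Algebra.adjoin_mono (by simp) (aeval_mem_adjoin_singleton k _))
    (Algebra.adjoin_mono (by simp) (aeval_mem_adjoin_singleton k _))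

end ProductAlgebra

lemma exists_injective_apply_eq_zero {k ι : Type*} [Field k] [Infinite k] [Countable ι]
    {φ : Dual k (ι → k)} (hφ : φ 1 ≠ 0) : ∃ c : ι → k, Function.Injective c ∧ φ c = 0 := by
  obtain ⟨toNat, toNat_injective⟩ := Countable.exists_injective_nat ι
  let c : ι → k := Infinite.natEmbedding k ∘ toNat
  have hc : Function.Injective c := (Infinite.natEmbedding k).injective.comp toNat_injective
  refine ⟨c - (φ c / φ 1) • 1, fun i j hij => hc (by simpa using hij), ?_⟩
  rw [map_sub, map_smul, smul_eq_mul, div_mul_cancel₀ _ hφ, sub_self]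

section Diagonalizable

/-- A square matrix is diagonalizable (over its own coefficient ring) if an invertible matrix
conjugates it to a diagonal one; this is how semisimple elements of `sl n k` are described. -/
def IsDiagonalizable {n R : Type*} [Fintype n] [DecidableEq n] [CommRing R] (M : Matrix n n R) :
    Prop :=
  ∃ u : (Matrix n n R)ˣ, ((↑u⁻¹ : Matrix n n R) * M * (↑u : Matrix n n R)).IsDiag

variable {n : Type*} [Fintype n] [DecidableEq n]

lemma isDiagonalizable_toMatrix_of_eigenbasis {R M κ : Type*} [CommRing R] [Nontrivial R]
    [AddCommGroup M] [Module R M] {f : End R M} {μ : κ → R} (b : Basis n R M) (e : Basis κ R M)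
    (he : ∀ j, f (e j) = μ j • e j) : IsDiagonalizable (LinearMap.toMatrix b b f) := by
  let e' : Basis n R M := e.reindex (e.indexEquiv b)
  have apply_e' (j : n) : f (e' j) = μ ((e.indexEquiv b).symm j) • e' j := by
    rw [e.reindex_apply, he]
  refine ⟨⟨b.toMatrix e', e'.toMatrix b, b.toMatrix_mul_toMatrix_flip e',
    e'.toMatrix_mul_toMatrix_flip b⟩, ?_⟩
  change (e'.toMatrix b * LinearMap.toMatrix b b f * b.toMatrix e').IsDiag
  rw [basis_toMatrix_mul_linearMap_toMatrix_mul_basis_toMatrix]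
  intro i j hij
  rw [LinearMap.toMatrix_apply, apply_e', map_smul, Finsupp.smul_apply, Basis.repr_self,
    Finsupp.single_eq_of_ne hij, smul_zero]

lemma isDiagonalizable_leftMulMatrix_algebraMap {k ι : Type*} [Field k] [Finite ι]
    {A : ι → Type*} [∀ i, Ring (A i)] [∀ i, Algebra k (A i)] (b : Basis n k (∀ i, A i))
    (c : ι → k) : IsDiagonalizable (Algebra.leftMulMatrix b fun i => algebraMap k (A i) (c i)) := by
  classical
  cases nonempty_fintype ι
  refine isDiagonalizable_toMatrix_of_eigenbasis (μ := fun j => c j.1) b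
    (Pi.basis fun i => Free.chooseBasis k (A i)) fun j => ?_
  ext i
  obtain rfl | hij := eq_or_ne i j.1
  · simp [Algebra.smul_def]
  · simp [hij]

end Diagonalizable

section CyclicDecomposition

universe u v

lemma adjoin_quotient_mk_X_eq_top {R : Type*} [CommRing R] (I : Ideal R[X]) :
    Algebra.adjoin R {Ideal.Quotient.mk I X} = ⊤ := by
  rw [← Ideal.Quotient.mkₐ_eq_mk R, ← Set.image_singleton, ← AlgHom.map_adjoin, adjoin_X,
    Algebra.map_top, AlgHom.range_eq_top]
  exact Ideal.Quotient.mkₐ_surjective R I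

variable {k : Type u} [Field k]

lemma exists_linearEquiv_pi_quotient {V : Type v} [AddCommGroup V] [Module k V]
    [FiniteDimensional k V] (f : End k V) :
    ∃ (ι : Type u) (_ : Fintype ι) (I : ι → Ideal k[X]) (E : V ≃ₗ[k] ∀ i, k[X] ⧸ I i),
      ∀ v, E (f v) = (fun i => Ideal.Quotient.mk (I i) X) * E v := by
  classical
  obtain ⟨ι, _, p, _, e, ⟨toDirectSum⟩⟩ := equiv_directSum_of_isTorsion (R := k[X])
    (M := AEval' f) (AEval.isTorsion_of_finiteDimensional k V f)
  let toPi := toDirectSum.trans (DirectSum.linearEquivFunOnFintype k[X] ι _)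
  refine ⟨ι, inferInstance, fun i => Ideal.span {p i ^ e i},
    (AEval'.of f).trans (toPi.restrictScalars k), fun v => ?_⟩
  have map_X_smul := toPi.map_smul X (AEval'.of f v)
  rw [AEval'.X_smul_of] at map_X_smul
  exact map_X_smul

lemma exists_leftMulMatrix_eq {n : Type v} [Fintype n] [DecidableEq n] (x : Matrix n n k) :
    ∃ (ι : Type u) (_ : Fintype ι) (I : ι → Ideal k[X]) (b : Basis n k (∀ i, k[X] ⧸ I i)),
      Algebra.leftMulMatrix b (fun i => Ideal.Quotient.mk (I i) X) = x := by
  obtain ⟨ι, _, I, E, hE⟩ := exists_linearEquiv_pi_quotient (Matrix.toLin' x)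
  refine ⟨ι, inferInstance, I, (Pi.basisFun k n).map E, ?_⟩
  ext i j
  rw [Algebra.leftMulMatrix_eq_repr_mul, Basis.map_apply, ← hE]
  simp

end CyclicDecomposition

lemma finrank_comap_ker_subtype_add_one {k V : Type*} [Field k] [AddCommGroup V] [Module k V]
    {φ : Dual k V} {S : Submodule k V} [FiniteDimensional k S] {v : V} (hv : v ∈ S)
    (hφ : φ v ≠ 0) : finrank k (S.comap (LinearMap.ker φ).subtype) + 1 = finrank k S := by
  have domRestrict_ne_zero : φ.domRestrict S ≠ 0 := fun h => hφ (LinearMap.congr_fun h ⟨v, hv⟩)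
  rw [← Dual.finrank_ker_add_one_of_ne_zero domRestrict_ne_zero, LinearMap.ker_domRestrict,
    ← Submodule.finrank_map_subtype_eq, ← Submodule.finrank_map_subtype_eq S,
    Submodule.map_comap_subtype, Submodule.map_comap_subtype, inf_comm]

section SpecialLinear

attribute [local instance] LieRing.ofAssociativeRing

variable {k n : Type*} [Fintype n] [DecidableEq n]

theorem exists_traceless_isDiagonalizable_finrank_centralizer [Field k] [Infinite k]
    (hcard : (Fintype.card n : k) ≠ 0) (x : Matrix n n k) :
    ∃ h : Matrix n n k, h.trace = 0 ∧ IsDiagonalizable h ∧ Commute h x ∧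
      finrank k (Subalgebra.centralizer k {h, x}) = Fintype.card n := by
  obtain ⟨ι, _, I, b, rfl⟩ := exists_leftMulMatrix_eq x
  let scalars : (ι → k) →ₗ[k] ∀ i, k[X] ⧸ I i :=
    LinearMap.piMap fun i => Algebra.linearMap k (k[X] ⧸ I i)
  have trace_one_ne_zero : (Algebra.trace k (∀ i, k[X] ⧸ I i) ∘ₗ scalars) 1 ≠ 0 := by
    have scalars_one : scalars 1 = algebraMap k _ 1 := rfl
    rwa [LinearMap.comp_apply, scalars_one, Algebra.trace_algebraMap_of_basis b, nsmul_one]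
  obtain ⟨c, hc, trace_scalars⟩ := exists_injective_apply_eq_zero trace_one_ne_zero
  have generates : Algebra.adjoin k {scalars c, fun i => Ideal.Quotient.mk (I i) X} = ⊤ :=
    adjoin_algebraMap_pair_eq_top (fun i => adjoin_quotient_mk_X_eq_top (I i)) hc
  refine ⟨Algebra.leftMulMatrix b (scalars c), ?_, isDiagonalizable_leftMulMatrix_algebraMap b c,
    (Commute.all _ _).map _, ?_⟩
  · rwa [← Algebra.trace_eq_matrix_trace]
  · rw [← Set.image_pair, centralizer_leftMulMatrix_image b generates,
      ← (AlgEquiv.ofInjective _ (Algebra.leftMulMatrix_injective b)).toLinearEquiv.finrank_eq,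
      finrank_eq_card_basis b]

lemma finrank_comap_sl_subtype_add_one [Field k] (hcard : (Fintype.card n : k) ≠ 0)
    (S : Subalgebra k (Matrix n n k)) :
    finrank k (S.toSubmodule.comap (sl n k).toSubmodule.subtype) + 1 = finrank k S :=
  finrank_comap_ker_subtype_add_one (φ := Matrix.traceLinearMap n k k) (S := S.toSubmodule)
    (one_mem S) (by rwa [Matrix.traceLinearMap_apply, Matrix.trace_one])

lemma sl_lie_eq_zero_iff_commute [CommRing k] {x y : sl n k} :
    ⁅x, y⁆ = 0 ↔ Commute (x : Matrix n n k) (y : Matrix n n k) := by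
  rw [← ZeroMemClass.coe_eq_zero, sl_bracket, sub_eq_zero, commute_iff_eq]

lemma ker_ad_inf_ker_ad_sl [CommRing k] (h x : sl n k) :
    LinearMap.ker (LieAlgebra.ad k (sl n k) h) ⊓ LinearMap.ker (LieAlgebra.ad k (sl n k) x) =
      (Subalgebra.centralizer k {h.1, x.1}).toSubmodule.comap (sl n k).toSubmodule.subtype := by
  ext y
  simp only [Submodule.mem_inf, LinearMap.mem_ker, LieAlgebra.ad_apply, sl_lie_eq_zero_iff_commute,
    commute_iff_eq, Submodule.mem_comap, Subalgebra.mem_toSubmodule,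
    Subalgebra.mem_centralizer_iff, Set.mem_insert_iff, Set.mem_singleton_iff, forall_eq_or_imp,
    forall_eq]
  rfl

theorem exists_isDiagonalizable_finrank_ker_ad_sl [Field k] [Infinite k]
    (hcard : Nonempty n → (Fintype.card n : k) ≠ 0) (x : sl n k) :
    ∃ h : sl n k, IsDiagonalizable (h : Matrix n n k) ∧ ⁅h, x⁆ = 0 ∧
      finrank k ↥(LinearMap.ker (LieAlgebra.ad k (sl n k) h) ⊓
        LinearMap.ker (LieAlgebra.ad k (sl n k) x)) = Fintype.card n - 1 := by
  cases isEmpty_or_nonempty n with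
  | inl _ =>
    refine ⟨0, ⟨1, fun i => isEmptyElim i⟩, zero_lie x, ?_⟩
    rw [Fintype.card_eq_zero]
    exact finrank_zero_of_subsingleton
  | inr hn =>
    obtain ⟨h, trace_h, h_diag, h_comm, finrank_centralizer⟩ :=
      exists_traceless_isDiagonalizable_finrank_centralizer (hcard hn) (x : Matrix n n k)
    refine ⟨⟨h, trace_h⟩, h_diag, sl_lie_eq_zero_iff_commute.mpr h_comm, ?_⟩
    rw [ker_ad_inf_ker_ad_sl, ← finrank_centralizer]
    exact Nat.eq_sub_of_add_eq (finrank_comap_sl_subtype_add_one (hcard hn) _)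

end SpecialLinear

section Product

variable {ι : Type*}

lemma finrank_submodule_pi {k : Type*} [Field k] [Fintype ι] {V : ι → Type*}
    [∀ i, AddCommGroup (V i)] [∀ i, Module k (V i)] (S : ∀ i, Submodule k (V i))
    [∀ i, FiniteDimensional k (S i)] :
    finrank k (Submodule.pi Set.univ S) = ∑ i, finrank k (S i) := by
  have range_piMap_subtype :
      LinearMap.range (LinearMap.piMap fun i => (S i).subtype) = Submodule.pi Set.univ S := by
    ext v
    simp only [LinearMap.mem_range, Submodule.mem_pi, Set.mem_univ, forall_const]
    exact ⟨by rintro ⟨w, rfl⟩ i; exact (w i).2, fun hv => ⟨fun i => ⟨v i, hv i⟩, rfl⟩⟩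
  rw [← range_piMap_subtype, LinearMap.finrank_range_of_inj, finrank_pi_fintype]
  exact Function.Injective.piMap fun i => Subtype.val_injective

lemma ker_ad_inf_ker_ad_pi {R : Type*} [CommRing R] {L : ι → Type*} [∀ i, LieRing (L i)]
    [∀ i, LieAlgebra R (L i)] (x y : ∀ i, L i) :
    LinearMap.ker (LieAlgebra.ad R (∀ i, L i) x) ⊓ LinearMap.ker (LieAlgebra.ad R (∀ i, L i) y) =
      Submodule.pi Set.univ fun i =>
        LinearMap.ker (LieAlgebra.ad R (L i) (x i)) ⊓
          LinearMap.ker (LieAlgebra.ad R (L i) (y i)) := by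
  ext z
  simp only [Submodule.mem_inf, LinearMap.mem_ker, LieAlgebra.ad_apply, Submodule.mem_pi,
    Set.mem_univ, forall_const, forall_and]
  exact and_congr funext_iff funext_iff

end Product

theorem exists_semisimple_commuting_with_regular_nilpotent_general
    {k ι : Type*} [Field k] [Infinite k] [Fintype ι] {n : ι → Type*} [∀ i, Fintype (n i)]
    [∀ i, DecidableEq (n i)] (hcard : ∀ i, Nonempty (n i) → (Fintype.card (n i) : k) ≠ 0)
    (x : ∀ i, sl (n i) k) :
    ∃ h : ∀ i, sl (n i) k, (∀ i, IsDiagonalizable (h i : Matrix (n i) (n i) k)) ∧ ⁅h, x⁆ = 0 ∧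
      finrank k ↥(LinearMap.ker (LieAlgebra.ad k (∀ i, sl (n i) k) h) ⊓
        LinearMap.ker (LieAlgebra.ad k (∀ i, sl (n i) k) x)) =
          ∑ i, (Fintype.card (n i) - 1) := by
  choose h h_diag h_comm finrank_ker_ad using
    fun i => exists_isDiagonalizable_finrank_ker_ad_sl (hcard i) (x i)
  refine ⟨h, h_diag, funext h_comm, ?_⟩
  rw [ker_ad_inf_ker_ad_pi, finrank_submodule_pi]
  exact Finset.sum_congr rfl fun i _ => finrank_ker_ad i

/-- Let `m = sl_{n₁} ⊕ … ⊕ sl_{n_q}` be a finite direct sum of special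
linear Lie algebras over an algebraically closed field `k` of characteristic zero, and let
`x ∈ m` be a nilpotent element (each matrix component is nilpotent).  Then there is a
semisimple element `h ∈ m` (each matrix component is diagonalizable) commuting with `x`
such that `x` is a regular element of the centralizer `m_h`:  the centralizer of `x` inside
`m_h` has dimension `rk m = (n₁ - 1) + … + (n_q - 1)`. -/
theorem exists_semisimple_commuting_with_regular_nilpotent
    (k : Type*) [Field k] [IsAlgClosed k] [CharZero k]
    (q : ℕ) (n : Fin q → ℕ)
    (x : ∀ i : Fin q, ↥(sl (Fin (n i)) k))
    (hx : ∀ i, IsNilpotent ((x i : Matrix (Fin (n i)) (Fin (n i)) k))) :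
    ∃ h : ∀ i : Fin q, ↥(sl (Fin (n i)) k),
      (∀ i, ∃ u : (Matrix (Fin (n i)) (Fin (n i)) k)ˣ,
        Matrix.IsDiag ((↑u⁻¹ : Matrix (Fin (n i)) (Fin (n i)) k)
          * (h i : Matrix (Fin (n i)) (Fin (n i)) k) * (↑u : Matrix (Fin (n i)) (Fin (n i)) k))) ∧
      ⁅h, x⁆ = 0 ∧
      Module.finrank k
          ↥(LinearMap.ker (LieAlgebra.ad k (∀ i : Fin q, ↥(sl (Fin (n i)) k)) h)
            ⊓ LinearMap.ker (LieAlgebra.ad k (∀ i : Fin q, ↥(sl (Fin (n i)) k)) x))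
        = ∑ i, (n i - 1) := by
  simpa only [Fintype.card_fin, IsDiagonalizable] using
    exists_semisimple_commuting_with_regular_nilpotent_general
      (fun _ _ => Nat.cast_ne_zero.mpr Fintype.card_ne_zero) x
end
end

section
/- Let m = sl_{n₁} ⊕ … ⊕ sl_{n_q} and let x ∈ m be a nilpotent element. Then codim_{m_x} I(m_x) ≥ 1, where I(m_x) := {y ∈ m_x : dim (m_x)_y > rk m}; equivalently, there exists y ∈ m_x with dim (m_x)_y = rk m = (n₁ − 1) + … + (n_q − 1), so that I(m_x) is a proper Zariski-closed subset of m_x. -/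
noncomputable section

open LieAlgebra.SpecialLinear Module

/-!
A subset of a vector space `U` on which a nonzero polynomial `F` vanishes maps into
`Spec (k[U] / F)`, whose Krull dimension is less than `dim U`. Since `dim ker` is upper
semicontinuous, with degeneracy loci cut out by determinants, it is enough to find a single
`y ∈ m_x` whose centralizer in `m_x` has dimension `rk m`, and this may be done in each factor
`sl_n` separately.

As a `k[X]`-module via `x`, the space `kⁿ` is a product `A = ∏ k[X] / (pᵢ)`, on which `x` is
multiplication by the tuple `ξ` of roots. Let `η` be a tuple of distinct constants. Lagrange
interpolation at `η` gives the idempotents of the factors, so `ξ` and `η` generate the commutative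
algebra `A`, and the endomorphisms commuting with both multiplications are those given by elements
of `A`. Hence the common centralizer of `x` and `η` in `gl_n` has dimension `dim A = n`. Subtracting
a scalar from `η` puts it into `sl_n` without changing the centralizer, and intersecting with `sl_n`
drops the dimension by one, because the identity has nonzero trace.
-/

open Topology

theorem topologicalKrullDim_add_one_le_ringKrullDim {X R : Type*} [TopologicalSpace X]
    [CommRing R] {φ : X → PrimeSpectrum R} (hφ : IsInducing φ) {a : R}
    (ha : a ∈ nonZeroDivisors R) (hφa : ∀ x, a ∈ (φ x).asIdeal) :
    topologicalKrullDim X + 1 ≤ ringKrullDim R := by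
  let π := Ideal.Quotient.mk (Ideal.span {a})
  have hπ : Function.Surjective π := Ideal.Quotient.mk_surjective
  have hlift : ∀ x, ∃ y, PrimeSpectrum.comap π y = φ x := fun x ↦ by
    rw [← Set.mem_range, range_comap_of_surjective _ π hπ, Ideal.mk_ker,
      PrimeSpectrum.zeroLocus_span]
    simpa using hφa x
  choose ψ hψ using hlift
  have hψ_inducing : IsInducing ψ := by
    rw [← (PrimeSpectrum.isClosedEmbedding_comap_of_surjective _ π hπ).isInducing.of_comp_iff]
    rwa [show PrimeSpectrum.comap π ∘ ψ = φ from funext hψ]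
  calc topologicalKrullDim X + 1
      ≤ topologicalKrullDim (PrimeSpectrum (R ⧸ Ideal.span {a})) + 1 := by
        gcongr; exact hψ_inducing.topologicalKrullDim_le
    _ = ringKrullDim (R ⧸ Ideal.span {a}) + 1 := by
        rw [PrimeSpectrum.topologicalKrullDim_eq_ringKrullDim]
    _ ≤ ringKrullDim R := ringKrullDim_quotient_succ_le_of_nonZeroDivisor ha

namespace CV

section Zariski

variable {k V W : Type*} [Field k] [AddCommGroup V] [Module k V] [FiniteDimensional k V]
  [AddCommGroup W] [Module k W] [FiniteDimensional k W]

variable (k) in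
/-- The point of `Spec k[V]` given by `z : V`, namely the ideal of polynomial functions vanishing
at `z`. It realises `CV.zar k V` as the topology induced from the prime spectrum. -/
def toPrimeSpectrum (z : V) :
    PrimeSpectrum (MvPolynomial (Module.Free.ChooseBasisIndex k V) k) :=
  MvPolynomial.pointToPoint (coordFn k V z)

theorem mem_toPrimeSpectrum_asIdeal {F : MvPolynomial (Module.Free.ChooseBasisIndex k V) k}
    {z : V} : F ∈ (toPrimeSpectrum k z).asIdeal ↔ evalP k V F z = 0 :=
  MvPolynomial.mem_vanishingIdeal_singleton_iff _ _

theorem zar_eq_induced_toPrimeSpectrum :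
    zar k V = TopologicalSpace.induced (toPrimeSpectrum k) PrimeSpectrum.zariskiTopology := by
  rw [PrimeSpectrum.isTopologicalBasis_basic_opens.eq_generateFrom, induced_generateFrom_eq, zar,
    ← Set.range_comp]
  congr 1
  ext U
  simp only [Set.mem_range, Function.comp_apply, Set.mem_ofPred_eq]
  refine exists_congr fun F ↦ ?_
  rw [eq_comm, show toPrimeSpectrum k ⁻¹' PrimeSpectrum.basicOpen F = {z : V | evalP k V F z ≠ 0}
    from Set.ext fun z ↦ mem_toPrimeSpectrum_asIdeal.not]

theorem exists_evalP_comp (f : V →ₗ[k] W)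
    (F : MvPolynomial (Module.Free.ChooseBasisIndex k W) k) :
    ∃ G, ∀ z, evalP k V G z = evalP k W F (f z) := by
  let b := Module.Free.chooseBasis k V
  let c := Module.Free.chooseBasis k W
  refine ⟨MvPolynomial.bind₁ (f.toMvPolynomial b c) F, fun z ↦ ?_⟩
  rw [evalP, evalP, MvPolynomial.aeval_bind₁]
  congr 2
  ext i
  have := f.toMvPolynomial_eval_eq_apply b c i (b.repr z)
  rwa [LinearEquiv.symm_apply_apply] at this

theorem continuous_zar (f : V →ₗ[k] W) : Continuous[zar k V, zar k W] f := by
  let _ := zar k V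
  refine continuous_generateFrom_iff.2 ?_
  rintro _ ⟨F, rfl⟩
  obtain ⟨G, hG⟩ := exists_evalP_comp f F
  refine TopologicalSpace.isOpen_generateFrom_of_mem ⟨G, ?_⟩
  simp only [Set.preimage_ofPred_eq, hG]

theorem isInducing_zar_of_injective {f : V →ₗ[k] W} (hf : Function.Injective f) :
    @IsInducing V W (zar k V) (zar k W) f := by
  obtain ⟨g, hg⟩ := f.exists_leftInverse_of_injective (LinearMap.ker_eq_bot.2 hf)
  let _ := zar k V
  let _ := zar k W
  have hgf : Function.LeftInverse g f := LinearMap.congr_fun hg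
  exact (hgf.isEmbedding (continuous_zar g) (continuous_zar f)).isInducing

theorem ringKrullDim_mvPolynomial_chooseBasisIndex :
    ringKrullDim (MvPolynomial (Module.Free.ChooseBasisIndex k V) k) = (finrank k V : ℕ∞) := by
  rw [MvPolynomial.ringKrullDim_of_isNoetherianRing, ringKrullDim_eq_zero_of_field, zero_add,
    Nat.card_eq_fintype_card, finrank_eq_card_chooseBasisIndex]
  rfl

theorem dimSet_add_one_le_finrank {U : Submodule k V} {S : Set V} (hSU : S ⊆ U)
    {F : MvPolynomial (Module.Free.ChooseBasisIndex k U) k} (hF : F ≠ 0)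
    (hFS : ∀ u : U, (u : V) ∈ S → evalP k U F u = 0) :
    dimSet k V S + 1 ≤ ((finrank k U : ℕ∞) : WithBot ℕ∞) := by
  let _ := zar k V
  let _ := zar k U
  have hU : IsInducing U.subtype := isInducing_zar_of_injective U.injective_subtype
  have hS : IsInducing (Set.inclusion hSU) := hU.of_comp_iff.1 IsInducing.subtypeVal
  have hspec : IsInducing (toPrimeSpectrum k (V := U)) := ⟨zar_eq_induced_toPrimeSpectrum⟩
  rw [← ringKrullDim_mvPolynomial_chooseBasisIndex]
  exact topologicalKrullDim_add_one_le_ringKrullDim (hspec.comp hS)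
    (mem_nonZeroDivisors_of_ne_zero hF)
    fun s ↦ mem_toPrimeSpectrum_asIdeal.2 (hFS (Set.inclusion hSU s) s.2)

end Zariski

section Degeneracy

variable {k W M N : Type*} [Field k] [AddCommGroup W] [Module k W] [FiniteDimensional k W]
  [AddCommGroup M] [Module k M] [FiniteDimensional k M] [AddCommGroup N] [Module k N]

theorem exists_evalP_eq_zero_iff_det_eq_zero (L : W →ₗ[k] Module.End k M) :
    ∃ F, ∀ w, evalP k W F w = 0 ↔ LinearMap.det (L w) = 0 := by
  refine ⟨(L.polyCharpoly (Module.Free.chooseBasis k W)).coeff 0, fun w ↦ ?_⟩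
  have hcoeff := L.polyCharpoly_coeff_eval (Module.Free.chooseBasis k W) w 0
  rw [← MvPolynomial.coe_aeval_eq_eval] at hcoeff
  rw [LinearMap.det_eq_sign_charpoly_coeff, ← hcoeff, neg_one_pow_mul_eq_zero_iff]
  rfl

/-- If `c` is a left inverse of `φ y` on a complement `U` of `ker (φ y)`, then
`w ↦ det (c ∘ φ w |_U)` is a polynomial which is `1` at `y` and vanishes wherever `ker (φ w)`
meets `U`, in particular wherever `ker (φ w)` is larger than `ker (φ y)`. -/
theorem exists_evalP_eq_zero_of_finrank_ker_lt (φ : W →ₗ[k] M →ₗ[k] N) (y : W) :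
    ∃ F ≠ 0, ∀ w, finrank k (φ y).ker < finrank k (φ w).ker → evalP k W F w = 0 := by
  obtain ⟨U, hU⟩ := (φ y).ker.exists_isCompl
  have hinj : (φ y ∘ₗ U.subtype).ker = ⊥ := by
    rw [LinearMap.ker_comp, ← Submodule.disjoint_iff_comap_eq_bot]
    exact hU.symm.disjoint
  obtain ⟨c, hc⟩ := LinearMap.exists_leftInverse_of_injective _ hinj
  obtain ⟨F, hF⟩ := exists_evalP_eq_zero_iff_det_eq_zero
    (LinearMap.llcomp k U N U c ∘ₗ LinearMap.lcomp k N U.subtype ∘ₗ φ)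
  have hFdet : ∀ w, evalP k W F w = 0 ↔ LinearMap.det (c ∘ₗ φ w ∘ₗ U.subtype) = 0 := hF
  refine ⟨F, ?_, fun w hw ↦ ?_⟩
  · rintro rfl
    have hdet := (hFdet y).1 (map_zero _)
    rw [hc, LinearMap.det_id] at hdet
    exact one_ne_zero hdet
  · rw [hFdet, LinearMap.det_eq_zero_iff_ker_ne_bot]
    intro hbot
    have hdisj : Disjoint U (φ w).ker := by
      rw [Submodule.disjoint_iff_comap_eq_bot, ← LinearMap.ker_comp]
      exact le_bot_iff.1 ((LinearMap.ker_le_ker_comp _ c).trans hbot.le)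
    have := Submodule.finrank_add_finrank_le_of_disjoint hdisj
    have := Submodule.finrank_add_eq_of_isCompl hU
    omega

end Degeneracy

end CV

open Polynomial

section RegularCommutant

universe u

variable {k : Type u} [Field k]

theorem finrank_centralizer_image {A B : Type*} [Ring A] [Algebra k A] [Ring B] [Algebra k B]
    (e : A ≃ₐ[k] B) (s : Set A) :
    finrank k (Subalgebra.centralizer k (e '' s)) = finrank k (Subalgebra.centralizer k s) := by
  have hmap : Subalgebra.centralizer k (e '' s) =
      (Subalgebra.centralizer k s).map (e : A →ₐ[k] B) := by
    ext b
    obtain ⟨a, rfl⟩ := e.surjective b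
    simp [Subalgebra.mem_centralizer_iff, ← map_mul]
  rw [hmap]
  have emap := (Subalgebra.centralizer k s).equivMapOfInjective (e : A →ₐ[k] B) e.injective
  exact emap.toLinearEquiv.finrank_eq.symm

theorem centralizer_lmul_image_eq_range {A : Type*} [CommRing A] [Algebra k A] {s : Set A}
    (hs : Algebra.adjoin k s = ⊤) :
    Subalgebra.centralizer k (Algebra.lmul k A '' s) = (Algebra.lmul k A).range := by
  apply le_antisymm
  · intro h hh
    have hcomm : ∀ a, h * Algebra.lmul k A a = Algebra.lmul k A a * h := fun a ↦ by
      have ha : Algebra.lmul k A a ∈ Algebra.adjoin k (Algebra.lmul k A '' s) := by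
        rw [← AlgHom.map_adjoin, hs]
        exact ⟨a, trivial, rfl⟩
      exact Algebra.adjoin_le_centralizer_centralizer k _ ha h hh
    refine ⟨h 1, LinearMap.ext fun a ↦ ?_⟩
    simpa [mul_comm] using (LinearMap.congr_fun (hcomm a) 1).symm
  · rintro _ ⟨a, rfl⟩
    rintro _ ⟨b, -, rfl⟩
    exact ((Commute.all b a).map (Algebra.lmul k A)).eq

theorem single_one_mem_adjoin {ι : Type*} [Finite ι] [DecidableEq ι] {A : ι → Type*}
    [∀ i, Ring (A i)] [∀ i, Algebra k (A i)] {c : ι → k} (hc : Function.Injective c) (i : ι) :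
    (Pi.single i 1 : ∀ i, A i) ∈ Algebra.adjoin k {fun i ↦ algebraMap k (A i) (c i)} := by
  have := Fintype.ofFinite ι
  have hbasis : (Pi.single i 1 : ∀ i, A i) =
      aeval (fun i ↦ algebraMap k (A i) (c i)) (Lagrange.basis Finset.univ c i) := by
    ext j
    rw [← Pi.evalAlgHom_apply k A j (aeval _ _), ← aeval_algHom_apply, Pi.evalAlgHom_apply,
      aeval_algebraMap_apply, coe_aeval_eq_eval]
    rcases eq_or_ne j i with rfl | hj
    · simp [Lagrange.eval_basis_self hc.injOn]
    · simp [Lagrange.eval_basis_of_ne hj.symm, hj]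
  rw [hbasis]
  exact aeval_mem_adjoin_singleton k _

theorem adjoin_pair_pi_eq_top {ι : Type*} [Finite ι] {A : ι → Type*} [∀ i, Ring (A i)]
    [∀ i, Algebra k (A i)] {a : ∀ i, A i} (ha : ∀ i, Algebra.adjoin k {a i} = ⊤) {c : ι → k}
    (hc : Function.Injective c) :
    Algebra.adjoin k {a, fun i ↦ algebraMap k (A i) (c i)} = ⊤ := by
  classical
  have := Fintype.ofFinite ι
  refine Algebra.eq_top_iff.2 fun b ↦ ?_
  rw [← Finset.univ_sum_single b]
  refine sum_mem fun i _ ↦ ?_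
  obtain ⟨p, hp⟩ : b i ∈ (aeval (R := k) (a i)).range := by
    rw [← Algebra.adjoin_singleton_eq_range_aeval, ha i]
    trivial
  have hfactor : Pi.single i (b i) = Pi.single i 1 * aeval a p := by
    rw [← Pi.single_mul_left, one_mul, ← hp]
    exact congrArg _ (aeval_algHom_apply (Pi.evalAlgHom k A i) a p)
  rw [hfactor]
  refine mul_mem (Algebra.adjoin_mono (by simp) (single_one_mem_adjoin hc i)) ?_
  exact Algebra.adjoin_mono (by simp) (aeval_mem_adjoin_singleton k a)

theorem exists_linearEquiv_pi_adjoinRoot {V : Type*} [AddCommGroup V] [Module k V]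
    [FiniteDimensional k V] (f : Module.End k V) :
    ∃ (ι : Type u) (_ : Finite ι) (p : ι → k[X]) (e : V ≃ₗ[k] ∀ i, AdjoinRoot (p i)),
      e.conj f = Algebra.lmul k _ fun i ↦ AdjoinRoot.root (p i) := by
  classical
  obtain ⟨ι, _, p, -, m, ⟨e⟩⟩ := Module.equiv_directSum_of_isTorsion
    (Module.AEval.isTorsion_of_finiteDimensional k V f)
  let ePi := e.trans (DirectSum.linearEquivFunOnFintype k[X] ι
    fun i ↦ k[X] ⧸ Submodule.span k[X] {p i ^ m i})
  refine ⟨ι, inferInstance, fun i ↦ p i ^ m i,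
    (Module.AEval'.of f).trans (ePi.restrictScalars k), ?_⟩
  rw [LinearEquiv.conj_apply, LinearEquiv.comp_toLinearMap_symm_eq]
  ext v i
  have hX : ePi (Module.AEval'.of f (f v)) i = (X : k[X]) • ePi (Module.AEval'.of f v) i := by
    rw [← Module.AEval'.X_smul_of, map_smul, Pi.smul_apply]
  exact hX.trans (Algebra.smul_def (A := k[X] ⧸ Ideal.span {p i ^ m i}) X _)

theorem exists_commute_finrank_centralizer_eq [Infinite k] {V : Type*} [AddCommGroup V]
    [Module k V] [FiniteDimensional k V] (f : Module.End k V) :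
    ∃ g, Commute f g ∧ finrank k (Subalgebra.centralizer k {f, g}) = finrank k V := by
  obtain ⟨ι, _, p, e, he⟩ := exists_linearEquiv_pi_adjoinRoot f
  obtain ⟨c, hc⟩ := exists_injective_nat ι
  let A := ∀ i, AdjoinRoot (p i)
  let ξ : A := fun i ↦ AdjoinRoot.root (p i)
  let η : A := fun i ↦ algebraMap k _ (Infinite.natEmbedding k (c i))
  have hgen : Algebra.adjoin k {ξ, η} = ⊤ :=
    adjoin_pair_pi_eq_top (fun i ↦ AdjoinRoot.adjoinRoot_eq_top)
      ((Infinite.natEmbedding k).injective.comp hc)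
  let Φ : Module.End k A ≃ₐ[k] Module.End k V := e.symm.conjAlgEquiv k
  have hf : f = Φ (Algebra.lmul k A ξ) := by
    rw [← he]
    exact (e.conj.symm_apply_apply f).symm
  refine ⟨Φ (Algebra.lmul k A η), ?_, ?_⟩
  · rw [hf]
    exact ((Commute.all ξ η).map (Algebra.lmul k A)).map Φ
  · rw [hf, ← Set.image_pair, finrank_centralizer_image, ← Set.image_pair,
      centralizer_lmul_image_eq_range hgen, e.finrank_eq]
    exact (AlgEquiv.ofInjective _ Algebra.lmul_injective).toLinearEquiv.finrank_eq.symm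

end RegularCommutant

section SpecialLinear

attribute [local instance] LieRing.ofAssociativeRing

variable {k n : Type*} [Field k] [Fintype n] [DecidableEq n]

theorem centralizer_pair_sub_algebraMap {A : Type*} [Ring A] [Algebra k A] (a b : A) (t : k) :
    Subalgebra.centralizer k {a, b - algebraMap k A t} = Subalgebra.centralizer k {a, b} := by
  ext z
  simp [Subalgebra.mem_centralizer_iff, sub_mul, mul_sub, Algebra.commutes]

theorem cent_inf_cent_sl_eq_comap_centralizer (x y : sl n k) :
    cent k x ⊓ cent k y = (Subalgebra.centralizer k {x.1, y.1}).toSubmodule.comap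
      (sl n k).toSubmodule.subtype := by
  have mem_cent_iff (a z : sl n k) : z ∈ cent k a ↔ a.1 * z.1 = z.1 * a.1 := by
    rw [← sub_eq_zero, ← sl_bracket]
    exact Subtype.ext_iff
  ext z
  simp only [Submodule.mem_inf, mem_cent_iff, Submodule.mem_comap, Subalgebra.mem_toSubmodule,
    Subalgebra.mem_centralizer_iff, Set.forall_mem_insert, Set.mem_singleton_iff, forall_eq]
  rfl

theorem finrank_comap_sl_add_one (hn : (Fintype.card n : k) ≠ 0)
    (C : Subalgebra k (Matrix n n k)) :
    finrank k (C.toSubmodule.comap (sl n k).toSubmodule.subtype) + 1 = finrank k C := by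
  let τ : Module.Dual k C := (Matrix.traceLinearMap n k k).domRestrict C.toSubmodule
  have hτ : τ ≠ 0 := fun h ↦ hn <| by
    rw [← Matrix.trace_one]
    exact LinearMap.congr_fun h 1
  have hker : τ.ker = (sl n k).toSubmodule.comap C.toSubmodule.subtype := rfl
  rw [← Module.Dual.finrank_ker_add_one_of_ne_zero hτ, hker,
    ← Submodule.finrank_map_subtype_eq, Submodule.map_comap_subtype, inf_comm,
    ← Submodule.map_comap_subtype, Submodule.finrank_map_subtype_eq]
  rfl

theorem exists_trace_eq_zero_commute_finrank_centralizer_eq [Infinite k]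
    (hn : (Fintype.card n : k) ≠ 0) (x : Matrix n n k) :
    ∃ y : Matrix n n k, y.trace = 0 ∧ Commute x y ∧
      finrank k (Subalgebra.centralizer k {x, y}) = Fintype.card n := by
  let E : Module.End k (n → k) ≃ₐ[k] Matrix n n k := LinearMap.toMatrixAlgEquiv'
  obtain ⟨g, hcomm, hdim⟩ := exists_commute_finrank_centralizer_eq (E.symm x)
  let t := (E g).trace / Fintype.card n
  refine ⟨E g - algebraMap k _ t, ?_, ?_, ?_⟩
  · rw [Matrix.trace_sub, Algebra.algebraMap_eq_smul_one, Matrix.trace_smul, Matrix.trace_one,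
      smul_eq_mul, div_mul_cancel₀ _ hn, sub_self]
  · refine Commute.sub_right ?_ (Algebra.commute_algebraMap_right t x)
    simpa using hcomm.map E
  · rw [centralizer_pair_sub_algebraMap, ← finrank_fintype_fun_eq_card k, ← hdim,
      ← finrank_centralizer_image E, Set.image_pair, E.apply_symm_apply]

theorem exists_mem_cent_sl_finrank_cent_inf_cent_eq [Infinite k]
    (hn : (Fintype.card n : k) = 0 → IsEmpty n) (x : sl n k) :
    ∃ y ∈ cent k x, finrank k ↥(cent k x ⊓ cent k y) = Fintype.card n - 1 := by
  by_cases hcard : (Fintype.card n : k) = 0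
  · have := hn hcard
    have : Subsingleton (sl n k) := Subtype.val_injective.subsingleton
    exact ⟨0, zero_mem _, by simp [finrank_zero_of_subsingleton]⟩
  · obtain ⟨y, htrace, hcomm, hdim⟩ :=
      exists_trace_eq_zero_commute_finrank_centralizer_eq hcard x.1
    refine ⟨⟨y, htrace⟩, Subtype.ext (sub_eq_zero.2 hcomm.eq), ?_⟩
    rw [cent_inf_cent_sl_eq_comap_centralizer, ← hdim]
    exact Nat.eq_sub_of_add_eq (finrank_comap_sl_add_one hcard _)

end SpecialLinear

section IrregularLocus

attribute [local instance] LieRing.ofAssociativeRing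

/-- The irregular locus of a subspace `U` of a Lie algebra with respect to `r`: the elements of `U`
whose centralizer in `U` has dimension greater than `r`. For `U = m_x` and `r = rk m` this is the
set `I(m_x)`. -/
def irregularLocus {k 𝔤 : Type*} [Field k] [LieRing 𝔤] [LieAlgebra k 𝔤] (U : Submodule k 𝔤)
    (r : ℕ) : Set 𝔤 :=
  {y | y ∈ U ∧ r < finrank k ↥(U ⊓ cent k y)}

variable {k 𝔤 : Type*} [Field k] [LieRing 𝔤] [LieAlgebra k 𝔤] {U : Submodule k 𝔤}

theorem irregularLocus_ssubset {y : 𝔤} (hy : y ∈ U) :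
    irregularLocus U (finrank k ↥(U ⊓ cent k y)) ⊂ U :=
  ⟨fun _ hz ↦ hz.1, fun h ↦ (h hy).2.false⟩

theorem dimSet_irregularLocus_add_one_le_finrank [FiniteDimensional k 𝔤] {y : 𝔤} (hy : y ∈ U) :
    CV.dimSet k 𝔤 (irregularLocus U (finrank k ↥(U ⊓ cent k y))) + 1 ≤
      ((finrank k U : ℕ∞) : WithBot ℕ∞) := by
  let φ : U →ₗ[k] U →ₗ[k] 𝔤 :=
    LinearMap.lcomp k 𝔤 U.subtype ∘ₗ (LieAlgebra.ad k 𝔤).toLinearMap ∘ₗ U.subtype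
  have hφ (u : U) : finrank k (φ u).ker = finrank k ↥(U ⊓ cent k u.1) := by
    rw [← Submodule.map_comap_subtype, Submodule.finrank_map_subtype_eq]
    rfl
  obtain ⟨F, hF, hFφ⟩ := CV.exists_evalP_eq_zero_of_finrank_ker_lt φ ⟨y, hy⟩
  refine CV.dimSet_add_one_le_finrank (fun _ hz ↦ hz.1) hF fun u hu ↦ hFφ u ?_
  rw [hφ, hφ]
  exact hu.2

theorem finrank_cent_inf_cent_pi {ι : Type*} [Fintype ι] {L : ι → Type*} [∀ i, LieRing (L i)]
    [∀ i, LieAlgebra k (L i)] [∀ i, FiniteDimensional k (L i)] (x y : ∀ i, L i) :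
    finrank k ↥(cent k x ⊓ cent k y) = ∑ i, finrank k ↥(cent k (x i) ⊓ cent k (y i)) := by
  rw [← Module.finrank_pi_fintype]
  exact LinearEquiv.finrank_eq
    { toFun z i := ⟨z.1 i, congrFun z.2.1 i, congrFun z.2.2 i⟩
      invFun z := ⟨fun i ↦ z i, funext fun i ↦ (z i).2.1, funext fun i ↦ (z i).2.2⟩
      map_add' _ _ := rfl
      map_smul' _ _ := rfl
      left_inv _ := rfl
      right_inv _ := rfl }

end IrregularLocus

theorem irregular_locus_of_centralizer_in_sl_proper_general {k ι : Type*} [Field k] [Infinite k]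
    [Fintype ι] {n : ι → Type*} [∀ i, Fintype (n i)] [∀ i, DecidableEq (n i)]
    (hn : ∀ i, (Fintype.card (n i) : k) = 0 → IsEmpty (n i)) (x : ∀ i, sl (n i) k) :
    (∃ y ∈ cent k x, finrank k ↥(cent k x ⊓ cent k y) = ∑ i, (Fintype.card (n i) - 1)) ∧
    irregularLocus (cent k x) (∑ i, (Fintype.card (n i) - 1)) ⊂ cent k x ∧
    CV.dimSet k (∀ i, sl (n i) k) (irregularLocus (cent k x) (∑ i, (Fintype.card (n i) - 1))) + 1 ≤
      ((finrank k (cent k x) : ℕ∞) : WithBot ℕ∞) := by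
  choose y hy hdim using fun i ↦ exists_mem_cent_sl_finrank_cent_inf_cent_eq (hn i) (x i)
  have hyx : y ∈ cent k x := funext hy
  have hyrank : finrank k ↥(cent k x ⊓ cent k y) = ∑ i, (Fintype.card (n i) - 1) := by
    simp only [finrank_cent_inf_cent_pi, hdim]
  rw [← hyrank]
  exact ⟨⟨y, hyx, rfl⟩, irregularLocus_ssubset hyx, dimSet_irregularLocus_add_one_le_finrank hyx⟩

/-- Let `m = sl_{n₁} ⊕ … ⊕ sl_{n_q}` over an algebraically closed field
of characteristic zero and let `x ∈ m` be nilpotent.  Then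
`codim_{m_x} I(m_x) ≥ 1` where `I(m_x) = {y ∈ m_x | dim (m_x)_y > rk m}`:  equivalently,
there exists `y ∈ m_x` with `dim (m_x)_y = rk m = (n₁ - 1) + … + (n_q - 1)`, so that
`I(m_x)` is a proper (Zariski-closed) subset of `m_x`, of dimension `< dim m_x`. -/
theorem irregular_locus_of_centralizer_in_sl_proper
    (k : Type*) [Field k] [IsAlgClosed k] [CharZero k]
    (q : ℕ) (n : Fin q → ℕ)
    (x : ∀ i : Fin q, ↥(sl (Fin (n i)) k))
    (hx : ∀ i, IsNilpotent ((x i : Matrix (Fin (n i)) (Fin (n i)) k))) :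
    (∃ y ∈ LinearMap.ker (LieAlgebra.ad k (∀ i : Fin q, ↥(sl (Fin (n i)) k)) x),
      Module.finrank k
          ↥(LinearMap.ker (LieAlgebra.ad k (∀ i : Fin q, ↥(sl (Fin (n i)) k)) x)
            ⊓ LinearMap.ker (LieAlgebra.ad k (∀ i : Fin q, ↥(sl (Fin (n i)) k)) y))
        = ∑ i, (n i - 1)) ∧
    {y | y ∈ LinearMap.ker (LieAlgebra.ad k (∀ i : Fin q, ↥(sl (Fin (n i)) k)) x) ∧
        ∑ i, (n i - 1)
          < Module.finrank k
              ↥(LinearMap.ker (LieAlgebra.ad k (∀ i : Fin q, ↥(sl (Fin (n i)) k)) x)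
                ⊓ LinearMap.ker (LieAlgebra.ad k (∀ i : Fin q, ↥(sl (Fin (n i)) k)) y))}
      ⊂ ↑(LinearMap.ker (LieAlgebra.ad k (∀ i : Fin q, ↥(sl (Fin (n i)) k)) x)) ∧
    CV.dimSet k (∀ i : Fin q, ↥(sl (Fin (n i)) k))
        {y | y ∈ LinearMap.ker (LieAlgebra.ad k (∀ i : Fin q, ↥(sl (Fin (n i)) k)) x) ∧
          ∑ i, (n i - 1)
            < Module.finrank k
                ↥(LinearMap.ker (LieAlgebra.ad k (∀ i : Fin q, ↥(sl (Fin (n i)) k)) x)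
                  ⊓ LinearMap.ker (LieAlgebra.ad k (∀ i : Fin q, ↥(sl (Fin (n i)) k)) y))}
        + 1
      ≤ ((Module.finrank k
          ↥(LinearMap.ker (LieAlgebra.ad k (∀ i : Fin q, ↥(sl (Fin (n i)) k)) x)) : ℕ∞)
          : WithBot ℕ∞) := by
  have h := irregular_locus_of_centralizer_in_sl_proper_general (n := fun i ↦ Fin (n i))
    (fun i hi ↦ Fintype.card_eq_zero_iff.1 (Nat.cast_eq_zero.1 hi)) x
  simp only [Fintype.card_fin] at h
  exact h
end
end
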